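/- Let T > 0, let g satisfy (g1) and lim_{s→0⁺} g(s)/s = 0, and assume that g is continuously differentiable on a right neighborhood [0,ε₀) of s = 0 for some ε₀ > 0. Let a ∈ L¹([0,T]) satisfy (a1) and (a2), and set g_∞ := liminf_{s→+∞} g(s)/s. Assume that for each i = 1,…,m there exist λᵢ with 0 < λᵢ < g_∞ and a C¹ function φᵢ : Iᵢ → ℝ with absolutely continuous derivative, φᵢ > 0 on the interior of Iᵢ, φᵢ = 0 at both endpoints of Iᵢ, and φᵢ'' + λᵢ a(x) φᵢ = 0 a.e. on Iᵢ (i.e., g_∞ > max_i λ₁ⁱ, where λ₁ⁱ is the first eigenvalue of φ'' + λ a(x) φ = 0 with φ = 0 on ∂Iᵢ). Then the equation u'' + a(x) g(u) = 0 has at least one positive solution satisfying the Neumann boundary conditions and at least one positive solution satisfying the periodic boundary conditions. -/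

import Mathlib

open MeasureTheory Set Filter

/-- `u` (with derivative `u'`) is a C¹ solution of `u'' + f(x) = 0` on `[0,T]`:
`u'` is absolutely continuous and the equation holds a.e., expressed via the
integral equation `u'(x) = u'(0) − ∫₀ˣ f(t) dt`. -/
def IsSolOn (T : ℝ) (f : ℝ → ℝ) (u u' : ℝ → ℝ) : Prop :=
  (∀ x ∈ Icc (0:ℝ) T, HasDerivWithinAt u (u' x) (Icc (0:ℝ) T) x) ∧
  ContinuousOn u' (Icc (0:ℝ) T) ∧
  ∀ x ∈ Icc (0:ℝ) T, u' x = u' 0 - ∫ t in (0:ℝ)..x, f t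

/-- The equation `u'' + a(x) g(u) = 0` on `[0,T]` has a positive solution
satisfying the Neumann boundary conditions. -/
def PosSolNeumann (T : ℝ) (a g : ℝ → ℝ) : Prop :=
  ∃ u u' : ℝ → ℝ, IsSolOn T (fun t => a t * g (u t)) u u' ∧
    (∀ x ∈ Icc (0:ℝ) T, 0 < u x) ∧ u' 0 = 0 ∧ u' T = 0

/-- The equation `u'' + a(x) g(u) = 0` on `[0,T]` has a positive solution
satisfying the periodic boundary conditions. -/
def PosSolPeriodic (T : ℝ) (a g : ℝ → ℝ) : Prop :=
  ∃ u u' : ℝ → ℝ, IsSolOn T (fun t => a t * g (u t)) u u' ∧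
    (∀ x ∈ Icc (0:ℝ) T, 0 < u x) ∧ u 0 = u T ∧ u' 0 = u' T

/-- Condition (g1): `g : [0,∞) → [0,∞)` is continuous, `g 0 = 0`, `g > 0` on `(0,∞)`. -/
def CondG1 (g : ℝ → ℝ) : Prop :=
  ContinuousOn g (Ici (0:ℝ)) ∧ (∀ s : ℝ, 0 ≤ s → 0 ≤ g s) ∧ g 0 = 0 ∧
    ∀ s : ℝ, 0 < s → 0 < g s

/-- `g` is regularly oscillating at zero. -/
def RegOscAtZero (g : ℝ → ℝ) : Prop :=
  ∀ ε : ℝ, 0 < ε → ∃ δ > (0:ℝ), ∃ η > (0:ℝ), ∀ s ω : ℝ,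
    0 < s → s < δ → |ω - 1| < η → |g (ω * s) / g s - 1| < ε

/-- `liminf_{s → +∞} g(s)/s`, computed in `EReal`. -/
noncomputable def GrowthLiminf (g : ℝ → ℝ) : EReal :=
  liminf (fun s : ℝ => ((g s / s : ℝ) : EReal)) atTop

/-- `limsup_{s → +∞} g(s)/s`, computed in `EReal`. -/
noncomputable def GrowthLimsup (g : ℝ → ℝ) : EReal :=
  limsup (fun s : ℝ => ((g s / s : ℝ) : EReal)) atTop

/-- `(lam, φ)` is a Dirichlet eigenpair of `φ'' + λ a(x) φ = 0` on `[x₁,x₂]` with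
`φ > 0` in the interior (so `lam` is the first eigenvalue): `φ` is `C¹` with
absolutely continuous derivative, expressed via the integral equation. -/
def DirichletEigenpair (a : ℝ → ℝ) (x₁ x₂ lam : ℝ) : Prop :=
  ∃ φ φ' : ℝ → ℝ,
    (∀ x ∈ Icc x₁ x₂, HasDerivWithinAt φ (φ' x) (Icc x₁ x₂) x) ∧
    ContinuousOn φ' (Icc x₁ x₂) ∧
    (∀ x ∈ Ioo x₁ x₂, 0 < φ x) ∧ φ x₁ = 0 ∧ φ x₂ = 0 ∧
    ∀ x ∈ Icc x₁ x₂, φ' x = φ' x₁ - lam * ∫ t in x₁..x, a t * φ t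

/-!
For a globally Lipschitz nonlinearity, extend the equation to negative `u` by `u'' + a g(u) + u⁻ =
0` so that solutions of the boundary value problem are nonnegative, parametrize solutions by complex
initial data, and let the boundary map record the defect in the boundary conditions. On a small
circle this map has nonzero winding number: scaling the nonlinear term by `θ → 0` leaves, after
averaging, only the sign of `∫ a < 0`, and no small nontrivial solution interferes because `g` has a
small Lipschitz constant near zero. On a large circle its winding number is zero: after adding `ν
a⁺` to the equation, solutions remain bounded by comparison with the Dirichlet eigenfunctions on the
intervals `Iᵢ` and the maximum principle elsewhere, and for large `ν` there are none. Hence some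
initial value between the two circles is a zero of the boundary map.

A continuous nonlinearity is the limit of its Lipschitz envelopes, which inherit both the behaviour
near zero and the affine lower bound, and the corresponding solutions converge by Arzelà–Ascoli. The
limit is nontrivial, since the approximations exceed a fixed height, and positive, since a zero
minimum would force it to vanish identically.
-/

section ContinuousLog

variable {A B P : Type*} [TopologicalSpace A] [TopologicalSpace B] [TopologicalSpace P]

/-- `f` has a continuous logarithm. For a nonvanishing loop `f : Circle → ℂ` this says that the
winding number of `f` around `0` is zero, and it is the only piece of degree theory used. -/
def HasContinuousLog (f : A → ℂ) : Prop :=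
  ∃ θ : A → ℂ, Continuous θ ∧ ∀ x, Complex.exp (θ x) = f x

namespace HasContinuousLog

lemma comp {f : A → ℂ} (hf : HasContinuousLog f) {g : B → A} (hg : Continuous g) :
    HasContinuousLog fun x => f (g x) :=
  let ⟨θ, hθ, hexp⟩ := hf
  ⟨fun x => θ (g x), hθ.comp hg, fun x => hexp (g x)⟩

lemma const {c : ℂ} (hc : c ≠ 0) : HasContinuousLog fun _ : A => c :=
  ⟨fun _ => Complex.log c, continuous_const, fun _ => Complex.exp_log hc⟩

lemma of_joinedIn {H : P × A → ℂ} (hH : Continuous H) {S : Set P}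
    (hne : ∀ p ∈ S, ∀ x, H (p, x) ≠ 0) {s t : P} (hst : JoinedIn S s t)
    (h : HasContinuousLog fun x => H (s, x)) : HasContinuousLog fun x => H (t, x) := by
  obtain ⟨γ, hγ⟩ := hst
  obtain ⟨θ, hθ, hexp⟩ := h
  let K : C(unitInterval × A, {z : ℂ // z ≠ 0}) :=
    ⟨fun q => ⟨H (γ q.1, q.2), hne _ (hγ q.1) q.2⟩, by fun_prop⟩
  have hK0 : ∀ x, K (0, x) = ⟨Complex.exp (θ x), Complex.exp_ne_zero _⟩ := fun x =>
    Subtype.ext (by simp [K, hexp])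
  let L := Complex.isCoveringMap_exp.liftHomotopy K ⟨θ, hθ⟩ hK0
  refine ⟨fun x => L (1, x), by fun_prop, fun x => ?_⟩
  have hlift := congrFun (Complex.isCoveringMap_exp.liftHomotopy_lifts K ⟨θ, hθ⟩ hK0) (1, x)
  exact (congrArg Subtype.val hlift).trans (by simp [K])

lemma of_forall_ne_zero {f : ℂ → ℂ} (hf : Continuous f) (hne : ∀ z, f z ≠ 0) :
    HasContinuousLog f := by
  simpa using of_joinedIn (H := fun q : ℂ × ℂ => f (q.1 * q.2)) (by fun_prop)
    (fun _ _ _ => hne _) (joinedIn_univ.2 (PathConnectedSpace.joined (0 : ℂ) 1))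
    (by simpa using const (hne 0))

end HasContinuousLog

lemma norm_ofReal_mul_circle {r : ℝ} (hr : 0 ≤ r) (z : Circle) : ‖(r : ℂ) * z‖ = r := by
  simp [abs_of_nonneg hr, Circle.norm_coe]

lemma not_hasContinuousLog_ofReal_mul_coe (ρ : ℝ) :
    ¬ HasContinuousLog fun z : Circle => (ρ : ℂ) * z := by
  rintro ⟨θ, hθ, hexp⟩
  have hcomp : (fun t : ℝ => θ (Circle.exp t)) = fun t : ℝ => (t : ℂ) * Complex.I + θ 1 := by
    refine Complex.isCoveringMap_exp.eq_of_comp_eq (by fun_prop) (by fun_prop) ?_ 0 (by simp)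
    funext t
    apply Subtype.ext
    simp only [Function.comp_apply, hexp, Complex.exp_add, Circle.coe_exp]
    simp [mul_comm]
  simpa using congrFun hcomp (2 * Real.pi)

lemma exists_eq_zero_of_hasContinuousLog_circle {f : ℂ → ℂ} (hf : Continuous f) {ρ R : ℝ}
    (hρ : 0 ≤ ρ) (hρR : ρ ≤ R) (hlogρ : ¬ HasContinuousLog fun z : Circle => f (ρ * z))
    (hlogR : HasContinuousLog fun z : Circle => f (R * z)) :
    ∃ z, ρ ≤ ‖z‖ ∧ f z = 0 := by
  by_contra! hne
  refine hlogρ (HasContinuousLog.of_joinedIn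
    (H := fun q : ℝ × Circle => f ((q.1 : ℂ) * q.2)) (by fun_prop)
    (S := Icc ρ R) (fun r hr z => hne _ ?_)
    (((convex_Icc ρ R).isPathConnected ⟨ρ, left_mem_Icc.2 hρR⟩).joinedIn R
      (right_mem_Icc.2 hρR) ρ (left_mem_Icc.2 hρR)) hlogR)
  rw [norm_ofReal_mul_circle (hρ.trans hr.1)]
  exact hr.1

end ContinuousLog

section BieleckiWeight

variable {c d x₀ : ℝ} {k : ℝ → ℝ}

lemma intervalIntegrable_of_mem_Icc {p : ℝ → ℝ} (hp : IntervalIntegrable p volume c d) {x y : ℝ}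
    (hx : x ∈ Icc c d) (hy : y ∈ Icc c d) : IntervalIntegrable p volume x y :=
  hp.mono_set (by rw [uIcc_of_le (hx.1.trans hx.2)]; exact uIcc_subset_Icc hx hy)

lemma continuousOn_primitive_Icc {p : ℝ → ℝ} (hp : IntervalIntegrable p volume c d)
    (hx₀ : x₀ ∈ Icc c d) : ContinuousOn (fun x => ∫ t in x₀..x, p t) (Icc c d) := by
  have huIcc := uIcc_of_le (hx₀.1.trans hx₀.2)
  exact huIcc ▸ intervalIntegral.continuousOn_primitive_interval' hp (huIcc ▸ hx₀)

lemma absolutelyContinuousOnInterval_comp_of_lipschitzOnWith {K : NNReal} {f P : ℝ → ℝ}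
    {s : Set ℝ} (hf : LipschitzOnWith K f s) (hP : AbsolutelyContinuousOnInterval P c d)
    (hs : MapsTo P (uIcc c d) s) : AbsolutelyContinuousOnInterval (fun x => f (P x)) c d := by
  unfold AbsolutelyContinuousOnInterval at hP ⊢
  refine squeeze_zero' (Eventually.of_forall fun _ => Finset.sum_nonneg fun _ _ => dist_nonneg) ?_
    (by simpa using Tendsto.const_mul (K : ℝ) hP)
  rw [eventually_inf_principal]
  filter_upwards with E hE
  rw [Finset.mul_sum]
  exact Finset.sum_le_sum fun i hi =>
    hf.dist_le_mul _ (hs (hE.1 i hi).1) _ (hs (hE.1 i hi).2)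

lemma integral_deriv_comp_primitive_mul {f : ℝ → ℝ} (hf : ContDiff ℝ 1 f)
    (hk : IntervalIntegrable k volume c d) :
    ∫ x in c..d, deriv f (∫ t in c..x, k t) * k x = f (∫ t in c..d, k t) - f 0 := by
  have hP := hk.absolutelyContinuousOnInterval_intervalIntegral (c := c) left_mem_uIcc
  obtain ⟨K, hK⟩ := (hf.locallyLipschitz.locallyLipschitzOn
    (s := (fun x => ∫ t in c..x, k t) '' uIcc c d)).exists_lipschitzOnWith_of_compact
    (isCompact_uIcc.image_of_continuousOn hP.continuousOn)
  have hfP := absolutelyContinuousOnInterval_comp_of_lipschitzOnWith hK hP (mapsTo_image _ _)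
  have hFTC := hfP.integral_deriv_eq_sub
  rw [intervalIntegral.integral_same] at hFTC
  rw [← hFTC]
  refine intervalIntegral.integral_congr_ae ?_
  filter_upwards [hk.ae_hasDerivAt_integral] with x hx hxm
  have hPx := hx (uIoc_subset_uIcc hxm) c left_mem_uIcc
  exact (((hf.differentiable one_ne_zero _).hasDerivAt.comp x hPx).deriv).symm

lemma mul_abs_integral_mul_exp_abs_primitive_le {x : ℝ} (hk : IntervalIntegrable k volume x₀ x)
    (hk0 : ∀ t, 0 ≤ k t) {C : ℝ} (hC : 0 ≤ C) :
    C * |∫ t in x₀..x, k t * Real.exp (C * |∫ s in x₀..t, k s|)| ≤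
      Real.exp (C * |∫ t in x₀..x, k t|) := by
  obtain ⟨ε, hε, habs⟩ : ∃ ε : ℝ, |ε| = 1 ∧
      ∀ t ∈ uIcc x₀ x, |∫ s in x₀..t, k s| = ε * ∫ s in x₀..t, k s := by
    rcases le_total x₀ x with h | h
    · refine ⟨1, abs_one, fun t ht => ?_⟩
      rw [uIcc_of_le h] at ht
      rw [one_mul, abs_of_nonneg (intervalIntegral.integral_nonneg ht.1 fun s _ => hk0 s)]
    · refine ⟨-1, by simp, fun t ht => ?_⟩
      rw [uIcc_of_ge h] at ht
      rw [intervalIntegral.integral_symm, abs_neg, neg_mul_neg, one_mul,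
        abs_of_nonneg (intervalIntegral.integral_nonneg ht.2 fun s _ => hk0 s)]
  have hint : C * ε * ∫ t in x₀..x, k t * Real.exp (C * |∫ s in x₀..t, k s|) =
      Real.exp (C * |∫ t in x₀..x, k t|) - 1 := by
    have hFTC := integral_deriv_comp_primitive_mul (f := fun y => Real.exp (C * ε * y))
      (by fun_prop) hk
    rw [habs x right_mem_uIcc, ← mul_assoc, ← intervalIntegral.integral_const_mul]
    rw [mul_zero, Real.exp_zero] at hFTC
    rw [← hFTC]
    refine intervalIntegral.integral_congr fun t ht => ?_
    have hderiv : deriv (fun y => Real.exp (C * ε * y)) (∫ s in x₀..t, k s) =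
        Real.exp (C * ε * ∫ s in x₀..t, k s) * (C * ε) := by
      simpa using (((hasDerivAt_id _).const_mul (C * ε)).exp).deriv
    simp only [hderiv, habs t ht, ← mul_assoc]
    ring
  calc C * |∫ t in x₀..x, k t * Real.exp (C * |∫ s in x₀..t, k s|)|
      = |Real.exp (C * |∫ t in x₀..x, k t|) - 1| := by
        rw [← hint, abs_mul, abs_mul, hε, mul_one, abs_of_nonneg hC]
    _ ≤ Real.exp (C * |∫ t in x₀..x, k t|) := by
        rw [abs_of_nonneg (sub_nonneg.2 (Real.one_le_exp (by positivity)))]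
        linarith

lemma exists_bielecki_weight (hk : IntervalIntegrable k volume c d) (hk0 : ∀ t, 0 ≤ k t)
    (hx₀ : x₀ ∈ Icc c d) :
    ∃ ω : ℝ → ℝ, ContinuousOn ω (Icc c d) ∧ (∀ x, 0 < ω x) ∧
      ∀ (p : ℝ → ℝ) (M : ℝ), 0 ≤ M → (∀ t ∈ Icc c d, |p t| ≤ k t * (M * ω t)) →
        ∀ x ∈ Icc c d, |∫ s in x₀..x, ∫ t in x₀..s, p t| ≤ M * ω x / 2 := by
  have hcd : c ≤ d := hx₀.1.trans hx₀.2
  set C : ℝ := 2 * (d - c) + 1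
  have hC : 0 < C := by linarith
  set ω : ℝ → ℝ := fun x => Real.exp (C * |∫ t in x₀..x, k t|)
  have hωc : ContinuousOn ω (Icc c d) :=
    ((continuousOn_primitive_Icc hk hx₀).abs.const_mul C).rexp
  have hωmono : ∀ x ∈ Icc c d, ∀ s ∈ uIoc x₀ x, ω s ≤ ω x := fun x hx s hs =>
    Real.exp_le_exp.2 (mul_le_mul_of_nonneg_left
      (intervalIntegral.abs_integral_mono_interval (uIoc_subset_uIoc_of_uIcc_subset_uIcc
        (uIcc_subset_uIcc left_mem_uIcc (uIoc_subset_uIcc hs))) (Eventually.of_forall hk0)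
      (intervalIntegrable_of_mem_Icc hk hx₀ hx)) hC.le)
  refine ⟨ω, hωc, fun x => Real.exp_pos _, fun p M hM hp x hx => ?_⟩
  have hinner : ∀ s ∈ Icc c d, |∫ t in x₀..s, p t| ≤ M * ω s / C := by
    intro s hs
    have hkω : IntervalIntegrable (fun t => M * (k t * ω t)) volume x₀ s :=
      ((intervalIntegrable_of_mem_Icc hk hx₀ hs).mul_continuousOn
        (hωc.mono (uIcc_subset_Icc hx₀ hs))).const_mul M
    have hbound : |∫ t in x₀..s, p t| ≤ |∫ t in x₀..s, M * (k t * ω t)| :=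
      intervalIntegral.norm_integral_le_abs_of_norm_le (f := p)
        ((ae_restrict_iff' measurableSet_uIoc).2 (Eventually.of_forall fun t ht =>
          (hp t (uIcc_subset_Icc hx₀ hs (uIoc_subset_uIcc ht))).trans_eq (by ring))) hkω
    rw [intervalIntegral.integral_const_mul, abs_mul, abs_of_nonneg hM] at hbound
    rw [le_div_iff₀ hC]
    have hweight := mul_abs_integral_mul_exp_abs_primitive_le
      (intervalIntegrable_of_mem_Icc hk hx₀ hs) hk0 hC.le
    calc |∫ t in x₀..s, p t| * C ≤ M * (C * |∫ t in x₀..s, k t * ω t|) := by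
          rw [mul_comm C, ← mul_assoc]; gcongr
      _ ≤ M * ω s := by gcongr
  calc |∫ s in x₀..x, ∫ t in x₀..s, p t| ≤ M * ω x / C * |x - x₀| :=
        intervalIntegral.norm_integral_le_of_norm_le_const
          (f := fun s => ∫ t in x₀..s, p t) fun s hs =>
          (hinner s (uIcc_subset_Icc hx₀ hx (uIoc_subset_uIcc hs))).trans (by
            have := hωmono x hx s hs
            gcongr)
    _ ≤ M * ω x / C * (C / 2) := by
        gcongr
        rw [abs_le]
        constructor <;> linarith [hx.1, hx.2, hx₀.1, hx₀.2]
    _ = M * ω x / 2 := by field_simp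

end BieleckiWeight

section VolterraOperator

lemma continuous_fixedPoint_of_contractingWith {P X : Type*} [TopologicalSpace P] [MetricSpace X]
    [CompleteSpace X] [Nonempty X] {K : NNReal} {Φ : P → X → X}
    (hΦ : ∀ p, ContractingWith K (Φ p)) (hcont : ∀ x, Continuous fun p => Φ p x) :
    Continuous fun p => (hΦ p).fixedPoint := by
  refine continuous_iff_continuousAt.2 fun p => tendsto_iff_dist_tendsto_zero.2 ?_
  set x := (hΦ p).fixedPoint
  have hlim : Tendsto (fun q => dist x (Φ q x) / (1 - K)) (nhds p) (nhds 0) := by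
    have := ((tendsto_const_nhds (x := x)).dist ((hcont x).tendsto p)).div_const (1 - (K : ℝ))
    rwa [(hΦ p).fixedPoint_isFixedPt.eq, dist_self, zero_div] at this
  refine squeeze_zero (fun _ => dist_nonneg) (fun q => ?_) hlim
  rw [dist_comm]
  exact (hΦ q).dist_le_of_fixedPoint x (hΦ q).fixedPoint_isFixedPt

lemma exists_continuous_resolvent {X : Type*} [TopologicalSpace X] [CompactSpace X]
    {J : C(X, ℝ) → C(X, ℝ)} {ω : C(X, ℝ)} (hω : ∀ x, 0 < ω x)
    (hJ : ∀ v w M, 0 ≤ M → (∀ x, |v x - w x| ≤ M * ω x) → ∀ x, |J v x - J w x| ≤ M * ω x / 2) :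
    ∃ S : unitInterval × C(X, ℝ) → C(X, ℝ), Continuous S ∧
      ∀ θ h, S (θ, h) = h - (θ : ℝ) • J (S (θ, h)) := by
  let ωinv : C(X, ℝ) := ⟨fun x => (ω x)⁻¹, ω.continuous.inv₀ fun x => (hω x).ne'⟩
  let Φ : unitInterval × C(X, ℝ) → C(X, ℝ) → C(X, ℝ) :=
    fun q w => ωinv * (q.2 - (q.1 : ℝ) • J (ω * w))
  have hΦ : ∀ q, ContractingWith 2⁻¹ (Φ q) := by
    refine fun q => ⟨inv_lt_one_of_one_lt₀ one_lt_two, LipschitzWith.of_dist_le_mul fun v w => ?_⟩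
    rw [ContinuousMap.dist_le (by positivity)]
    intro x
    have hdist : ∀ y, |(ω * v) y - (ω * w) y| ≤ dist v w * ω y := fun y => by
      rw [ContinuousMap.mul_apply, ContinuousMap.mul_apply, ← mul_sub, abs_mul,
        abs_of_pos (hω y), mul_comm]
      exact mul_le_mul_of_nonneg_right
        ((Real.dist_eq _ _).symm.trans_le (ContinuousMap.dist_apply_le_dist y)) (hω y).le
    calc dist (Φ q v x) (Φ q w x)
        = (ω x)⁻¹ * (q.1 * |J (ω * v) x - J (ω * w) x|) := by
          have hsub : Φ q v x - Φ q w x =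
              -((ω x)⁻¹ * (q.1 * (J (ω * v) x - J (ω * w) x))) := by
            simp only [Φ, ωinv, ContinuousMap.mul_apply, ContinuousMap.sub_apply,
              ContinuousMap.smul_apply, ContinuousMap.coe_mk, smul_eq_mul]
            ring
          rw [Real.dist_eq, hsub, abs_neg, abs_mul, abs_mul, abs_of_nonneg q.1.2.1,
            abs_of_pos (inv_pos.2 (hω x))]
      _ ≤ (ω x)⁻¹ * (1 * (dist v w * ω x / 2)) := by
          have := (inv_pos.2 (hω x)).le
          have := hJ _ _ _ dist_nonneg hdist x
          have := q.1.2.2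
          gcongr
      _ = (2⁻¹ : NNReal) * dist v w := by
          have := (hω x).ne'
          push_cast
          field_simp
  refine ⟨fun q => ω * (hΦ q).fixedPoint, continuous_const.mul
    (continuous_fixedPoint_of_contractingWith hΦ fun w => by fun_prop), fun θ h => ?_⟩
  set w := (hΦ (θ, h)).fixedPoint
  have hw : ωinv * (h - (θ : ℝ) • J (ω * w)) = w := (hΦ (θ, h)).fixedPoint_isFixedPt
  have hωinv : ω * ωinv = 1 := by
    ext x
    exact mul_inv_cancel₀ (hω x).ne'
  calc ω * w = ω * (ωinv * (h - (θ : ℝ) • J (ω * w))) := by rw [hw]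
    _ = h - (θ : ℝ) • J (ω * w) := by rw [← mul_assoc, hωinv, one_mul]

lemma continuousOn_double_primitive {c d : ℝ} {p : ℝ → ℝ} (hp : IntervalIntegrable p volume c d)
    (hcd : c ≤ d) : ContinuousOn (fun x => ∫ s in c..x, ∫ t in c..s, p t) (Icc c d) :=
  continuousOn_primitive_Icc (ContinuousOn.intervalIntegrable_of_Icc hcd
    (continuousOn_primitive_Icc hp (left_mem_Icc.2 hcd))) (left_mem_Icc.2 hcd)

lemma exists_continuous_volterra_solution {c d : ℝ} (hcd : c ≤ d) {k : ℝ → ℝ}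
    (hk : IntervalIntegrable k volume c d) (hk0 : ∀ t, 0 ≤ k t) {N : C(Icc c d, ℝ) → ℝ → ℝ}
    (hN : ∀ v, IntervalIntegrable (N v) volume c d)
    (hlip : ∀ v w, ∀ t : Icc c d, |N v t - N w t| ≤ k t * |v t - w t|) :
    ∃ S : unitInterval × C(Icc c d, ℝ) → C(Icc c d, ℝ), Continuous S ∧
      ∀ θ h x, S (θ, h) x = h x - θ * ∫ s in c..x, ∫ t in c..s, N (S (θ, h)) t := by
  have hc : c ∈ Icc c d := left_mem_Icc.2 hcd
  obtain ⟨ω, hωc, hω, hweight⟩ := exists_bielecki_weight hk hk0 hc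
  let J : C(Icc c d, ℝ) → C(Icc c d, ℝ) := fun v =>
    ⟨fun x => ∫ s in c..x, ∫ t in c..s, N v t,
      (continuousOn_double_primitive (hN v) hcd).domRestrict⟩
  have hJ : ∀ v w M, 0 ≤ M → (∀ x : Icc c d, |v x - w x| ≤ M * ω x) →
      ∀ x, |J v x - J w x| ≤ M * ω x / 2 := by
    intro v w M hM hvw x
    have hNvw : ∀ t ∈ Icc c d, |N v t - N w t| ≤ k t * (M * ω t) := fun t ht =>
      (hlip v w ⟨t, ht⟩).trans (mul_le_mul_of_nonneg_left (hvw ⟨t, ht⟩) (hk0 t))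
    have hprim : ∀ u, IntervalIntegrable (fun s => ∫ t in c..s, N u t) volume c x := fun u =>
      intervalIntegrable_of_mem_Icc (ContinuousOn.intervalIntegrable_of_Icc hcd
        (continuousOn_primitive_Icc (hN u) hc)) hc x.2
    have hsub : J v x - J w x = ∫ s in c..x, ∫ t in c..s, (N v t - N w t) := by
      refine (intervalIntegral.integral_sub (hprim v) (hprim w)).symm.trans
        (intervalIntegral.integral_congr fun s hs => ?_)
      have hs' := uIcc_subset_Icc hc x.2 hs
      exact (intervalIntegral.integral_sub (intervalIntegrable_of_mem_Icc (hN v) hc hs')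
        (intervalIntegrable_of_mem_Icc (hN w) hc hs')).symm
    rw [hsub]
    exact hweight _ M hM hNvw x x.2
  obtain ⟨S, hS, heq⟩ := exists_continuous_resolvent
    (ω := ⟨fun x : Icc c d => ω x, hωc.domRestrict⟩) (fun x => hω x) hJ
  exact ⟨S, hS, fun θ h x => congrArg (fun v : C(Icc c d, ℝ) => v x) (heq θ h)⟩

end VolterraOperator

section LinearEquation

/-- `u`, with derivative `u'`, is a `C¹` solution on `[c, d]` of `u'' + p = 0`, where `p` is
integrable and the equation is integrated once. -/
structure IsSolOnIcc (c d : ℝ) (p u u' : ℝ → ℝ) : Prop where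
  le : c ≤ d
  hasDerivWithinAt : ∀ x ∈ Icc c d, HasDerivWithinAt u (u' x) (Icc c d) x
  intervalIntegrable : IntervalIntegrable p volume c d
  deriv_eq : ∀ x ∈ Icc c d, u' x = u' c - ∫ t in c..x, p t

namespace IsSolOnIcc

variable {c d : ℝ} {p q u u' v v' : ℝ → ℝ}

lemma continuousOn (h : IsSolOnIcc c d p u u') : ContinuousOn u (Icc c d) :=
  fun x hx => (h.hasDerivWithinAt x hx).continuousWithinAt

lemma continuousOn_deriv (h : IsSolOnIcc c d p u u') : ContinuousOn u' (Icc c d) :=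
  (continuousOn_const.sub (continuousOn_primitive_Icc h.intervalIntegrable
    (left_mem_Icc.2 h.le))).congr h.deriv_eq

lemma deriv_eq_sub (h : IsSolOnIcc c d p u u') {x y : ℝ} (hx : x ∈ Icc c d) (hy : y ∈ Icc c d) :
    u' y = u' x - ∫ t in x..y, p t := by
  have hc : c ∈ Icc c d := left_mem_Icc.2 h.le
  have hadd := intervalIntegral.integral_add_adjacent_intervals
    (intervalIntegrable_of_mem_Icc h.intervalIntegrable hc hx)
    (intervalIntegrable_of_mem_Icc h.intervalIntegrable hx hy)
  linarith [h.deriv_eq x hx, h.deriv_eq y hy]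

lemma mono (h : IsSolOnIcc c d p u u') {c' d' : ℝ} (hcd : c' ≤ d')
    (hsub : Icc c' d' ⊆ Icc c d) : IsSolOnIcc c' d' p u u' where
  le := hcd
  hasDerivWithinAt x hx := (h.hasDerivWithinAt x (hsub hx)).mono hsub
  intervalIntegrable := intervalIntegrable_of_mem_Icc h.intervalIntegrable
    (hsub (left_mem_Icc.2 hcd)) (hsub (right_mem_Icc.2 hcd))
  deriv_eq _ hx := h.deriv_eq_sub (hsub (left_mem_Icc.2 hcd)) (hsub hx)

lemma neg (h : IsSolOnIcc c d p u u') : IsSolOnIcc c d (-p) (-u) (-u') where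
  le := h.le
  hasDerivWithinAt x hx := (h.hasDerivWithinAt x hx).neg
  intervalIntegrable := h.intervalIntegrable.neg
  deriv_eq x hx := by
    simp only [Pi.neg_apply, intervalIntegral.integral_neg, h.deriv_eq x hx]
    ring

lemma congr (h : IsSolOnIcc c d p u u') (hpq : EqOn p q (Icc c d)) : IsSolOnIcc c d q u u' where
  le := h.le
  hasDerivWithinAt := h.hasDerivWithinAt
  intervalIntegrable := h.intervalIntegrable.congr fun t ht =>
    hpq (Ioc_subset_Icc_self (uIoc_of_le h.le ▸ ht))
  deriv_eq x hx := by
    rw [h.deriv_eq x hx]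
    refine congrArg _ (intervalIntegral.integral_congr fun t ht => hpq ?_)
    rw [uIcc_of_le hx.1] at ht
    exact ⟨ht.1, ht.2.trans hx.2⟩

lemma eq_add_sub_integral (h : IsSolOnIcc c d p u u') {x₀ x : ℝ} (hx₀ : x₀ ∈ Icc c d)
    (hx : x ∈ Icc c d) :
    u x = u x₀ + u' x₀ * (x - x₀) - ∫ s in x₀..x, ∫ t in x₀..s, p t := by
  have hsub : uIcc x₀ x ⊆ Icc c d := uIcc_subset_Icc hx₀ hx
  have hu' : IntervalIntegrable u' volume x₀ x :=
    (h.continuousOn_deriv.mono hsub).intervalIntegrable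
  have hFTC : ∫ s in x₀..x, u' s = u x - u x₀ :=
    intervalIntegral.integral_eq_sub_of_hasDeriv_right (h.continuousOn.mono hsub)
      (fun y hy => ((h.hasDerivWithinAt y (hsub (Ioo_subset_Icc_self hy))).hasDerivAt
        (mem_of_superset (Icc_mem_nhds hy.1 hy.2) hsub)).hasDerivWithinAt) hu'
  have hprim : ∫ s in x₀..x, ∫ t in x₀..s, p t = ∫ s in x₀..x, (u' x₀ - u' s) :=
    intervalIntegral.integral_congr fun s hs => by
      simp only [h.deriv_eq_sub hx₀ (hsub hs), sub_sub_cancel]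
  rw [hprim, intervalIntegral.integral_sub intervalIntegrable_const hu', hFTC,
    intervalIntegral.integral_const, smul_eq_mul]
  ring

lemma of_eq_add_sub_integral (hcd : c ≤ d) (hp : IntervalIntegrable p volume c d) {y₀ y₁ : ℝ}
    (hu : ∀ x ∈ Icc c d, u x = y₀ + y₁ * (x - c) - ∫ s in c..x, ∫ t in c..s, p t) :
    IsSolOnIcc c d p u (fun x => y₁ - ∫ t in c..x, p t) where
  le := hcd
  hasDerivWithinAt x hx := by
    have hc : c ∈ Icc c d := left_mem_Icc.2 hcd
    have hprim := continuousOn_primitive_Icc hp hc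
    have : Fact (x ∈ Icc c d) := ⟨hx⟩
    have hdouble : HasDerivWithinAt (fun x => ∫ s in c..x, ∫ t in c..s, p t)
        (∫ t in c..x, p t) (Icc c d) x := intervalIntegral.integral_hasDerivWithinAt_right
      (hprim.mono (uIcc_subset_Icc hc hx)).intervalIntegrable
      (hprim.stronglyMeasurableAtFilter_nhdsWithin measurableSet_Icc x) (hprim x hx)
    refine (((((hasDerivWithinAt_id x _).sub_const c).const_mul y₁).const_add y₀).sub
      hdouble).congr_deriv (by rw [mul_one]) |>.congr hu (hu x hx)
  intervalIntegrable := hp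
  deriv_eq _ _ := by simp

lemma abs_sub_le (h : IsSolOnIcc c d p u u') {C : ℝ} (hC : ∀ x ∈ Icc c d, |u' x| ≤ C) {x y : ℝ}
    (hx : x ∈ Icc c d) (hy : y ∈ Icc c d) : |u y - u x| ≤ C * |y - x| :=
  (convex_Icc c d).norm_image_sub_le_of_norm_hasDerivWithin_le h.hasDerivWithinAt hC hx hy

lemma eq_zero (h : IsSolOnIcc c d p u u') {k : ℝ → ℝ} (hk : IntervalIntegrable k volume c d)
    (hk0 : ∀ t, 0 ≤ k t) (hpu : ∀ x ∈ Icc c d, |p x| ≤ k x * |u x|) {x₀ : ℝ}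
    (hx₀ : x₀ ∈ Icc c d) (hu₀ : u x₀ = 0) (hu'₀ : u' x₀ = 0) : ∀ x ∈ Icc c d, u x = 0 := by
  obtain ⟨ω, hωc, hω, hωp⟩ := exists_bielecki_weight hk hk0 hx₀
  obtain ⟨z, hz, hmax⟩ := isCompact_Icc.exists_isMaxOn ⟨x₀, hx₀⟩
    (h.continuousOn.abs.div hωc fun x _ => (hω x).ne')
  have hle : ∀ x ∈ Icc c d, |u x| ≤ |u z| / ω z * ω x := fun x hx =>
    (div_le_iff₀ (hω x)).1 (hmax hx)
  have hhalf := hωp p (|u z| / ω z) (div_nonneg (abs_nonneg _) (hω z).le)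
    (fun t ht => (hpu t ht).trans (mul_le_mul_of_nonneg_left (hle t ht) (hk0 t))) z hz
  have huz := h.eq_add_sub_integral hx₀ hz
  rw [hu₀, hu'₀, zero_mul, zero_add, zero_sub] at huz
  rw [div_mul_cancel₀ _ (hω z).ne', ← abs_neg, ← huz] at hhalf
  intro x hx
  have huz0 : |u z| = 0 := by linarith [abs_nonneg (u z)]
  simpa [huz0] using hle x hx

lemma absolutelyContinuousOnInterval (h : IsSolOnIcc c d p u u') :
    AbsolutelyContinuousOnInterval u c d := by
  obtain ⟨C, hC⟩ := isCompact_Icc.exists_bound_of_continuousOn h.continuousOn_deriv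
  refine LipschitzOnWith.absolutelyContinuousOnInterval (K := C.toNNReal) ?_
  rw [uIcc_of_le h.le]
  exact (convex_Icc c d).lipschitzOnWith_of_nnnorm_hasDerivWithin_le h.hasDerivWithinAt
    fun x hx => NNReal.coe_le_coe.1 ((hC x hx).trans (Real.le_coe_toNNReal C))

lemma integral_deriv_mul_deriv (h : IsSolOnIcc c d p u u')
    (h' : IsSolOnIcc c d q v v') :
    ∫ x in c..d, u' x * v' x = u' d * v d - u' c * v c + ∫ x in c..d, p x * v x := by
  have huIcc := uIcc_of_le h.le
  set P : ℝ → ℝ := fun x => u' c - ∫ t in c..x, p t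
  have hP : AbsolutelyContinuousOnInterval P c d :=
    (LipschitzWith.const (u' c)).lipschitzOnWith.absolutelyContinuousOnInterval.sub
      (h.intervalIntegrable.absolutelyContinuousOnInterval_intervalIntegral left_mem_uIcc)
  have hFTC := hP.integral_deriv_mul_eq_sub (h'.absolutelyContinuousOnInterval)
  have hPd : P d = u' d := (h.deriv_eq d (right_mem_Icc.2 h.le)).symm
  have hPc : P c = u' c := (h.deriv_eq c (left_mem_Icc.2 h.le)).symm
  rw [hPd, hPc] at hFTC
  have hpv : IntervalIntegrable (fun x => p x * v x) volume c d :=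
    h.intervalIntegrable.mul_continuousOn (huIcc ▸ h'.continuousOn)
  have huv' : IntervalIntegrable (fun x => u' x * v' x) volume c d :=
    (huIcc ▸ h.continuousOn_deriv.mul h'.continuousOn_deriv).intervalIntegrable
  rw [← hFTC, ← sub_eq_iff_eq_add, ← intervalIntegral.integral_sub huv' hpv]
  refine intervalIntegral.integral_congr_ae ?_
  filter_upwards [h.intervalIntegrable.ae_hasDerivAt_integral,
    compl_mem_ae_iff.2 (measure_singleton d)] with x hx hxd hxm
  have hPx : HasDerivAt P (-p x) x := (hx (uIoc_subset_uIcc hxm) c left_mem_uIcc).const_sub _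
  rw [uIoc_of_le h.le] at hxm
  have hxI : x ∈ Icc c d := Ioc_subset_Icc_self hxm
  have hvx := (h'.hasDerivWithinAt x hxI).hasDerivAt
    (Icc_mem_nhds hxm.1 (lt_of_le_of_ne hxm.2 hxd))
  rw [hPx.deriv, hvx.deriv, h.deriv_eq x hxI]
  ring

lemma integral_mul_sub_mul (h : IsSolOnIcc c d p u u')
    (h' : IsSolOnIcc c d q v v') :
    ∫ x in c..d, p x * v x - q x * u x = (u d * v' d - u' d * v d) - (u c * v' c - u' c * v c) := by
  have huIcc := uIcc_of_le h.le
  have hswap : ∫ x in c..d, u' x * v' x = ∫ x in c..d, v' x * u' x := by simp only [mul_comm]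
  rw [h.integral_deriv_mul_deriv h', h'.integral_deriv_mul_deriv h] at hswap
  rw [intervalIntegral.integral_sub
    (h.intervalIntegrable.mul_continuousOn (huIcc ▸ h'.continuousOn))
    (h'.intervalIntegrable.mul_continuousOn (huIcc ▸ h.continuousOn))]
  linarith

end IsSolOnIcc

end LinearEquation

section BoundaryValueProblem

/-- The two boundary conditions considered on an interval. -/
inductive BoundaryCond
  | neumann
  | periodic

/-- `B.Holds T u u'`: the function `u` with derivative `u'` satisfies the boundary condition `B`
at the endpoints of `[0, T]`. -/
def BoundaryCond.Holds : BoundaryCond → ℝ → (ℝ → ℝ) → (ℝ → ℝ) → Prop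
  | neumann, T, _, u' => u' 0 = 0 ∧ u' T = 0
  | periodic, T, u, u' => u 0 = u T ∧ u' 0 = u' T

/-- `u` solves `u'' + p = 0` on `[0, T]` under the boundary condition `B`. -/
structure IsBVPSol (B : BoundaryCond) (T : ℝ) (p u u' : ℝ → ℝ) : Prop
    extends IsSolOnIcc 0 T p u u' where
  holds : B.Holds T u u'

variable {B : BoundaryCond} {T : ℝ} {p q u u' : ℝ → ℝ}

namespace BoundaryCond.Holds

lemma deriv_eq (h : B.Holds T u u') : u' 0 = u' T := by
  cases B with
  | neumann => exact h.1.trans h.2.symm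
  | periodic => exact h.2

lemma neg (h : B.Holds T u u') : B.Holds T (-u) (-u') := by
  cases B <;> simpa [Holds] using h

end BoundaryCond.Holds

lemma mul_sub_nonneg_of_isMinOn_Icc {c d x y m : ℝ} {f : ℝ → ℝ} (hmin : IsMinOn f (Icc c d) x)
    (hf : HasDerivWithinAt f m (Icc c d) x) (hx : x ∈ Icc c d) (hy : y ∈ Icc c d) :
    0 ≤ m * (y - x) := by
  have hcone : y - x ∈ posTangentConeAt (Icc c d) x :=
    sub_mem_posTangentConeAt_of_segment_subset ((convex_Icc c d).segment_subset hx hy)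
  simpa [mul_comm] using hmin.localize.hasFDerivWithinAt_nonneg hf.hasFDerivWithinAt hcone

lemma integral_integral_nonneg_of_ae {x y : ℝ} (hp : 0 ≤ᵐ[volume.restrict (uIcc x y)] p) :
    0 ≤ ∫ s in x..y, ∫ t in x..s, p t := by
  rcases le_total x y with hxy | hyx
  · rw [uIcc_of_le hxy] at hp
    exact intervalIntegral.integral_nonneg hxy fun s hs =>
      intervalIntegral.integral_nonneg_of_ae_restrict hs.1
        (ae_restrict_of_ae_restrict_of_subset (Icc_subset_Icc_right hs.2) hp)
  · rw [uIcc_of_ge hyx] at hp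
    rw [intervalIntegral.integral_symm, ← intervalIntegral.integral_neg]
    refine intervalIntegral.integral_nonneg hyx fun s hs => ?_
    rw [← intervalIntegral.integral_symm]
    exact intervalIntegral.integral_nonneg_of_ae_restrict hs.2
      (ae_restrict_of_ae_restrict_of_subset (Icc_subset_Icc_left hs.1) hp)

namespace IsBVPSol

lemma neg (h : IsBVPSol B T p u u') : IsBVPSol B T (-p) (-u) (-u') :=
  ⟨h.toIsSolOnIcc.neg, h.holds.neg⟩

lemma congr (h : IsBVPSol B T p u u') (hpq : EqOn p q (Icc 0 T)) : IsBVPSol B T q u u' :=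
  ⟨h.toIsSolOnIcc.congr hpq, h.holds⟩

lemma integral_eq_zero (h : IsBVPSol B T p u u') : ∫ t in (0 : ℝ)..T, p t = 0 := by
  linarith [h.deriv_eq T (right_mem_Icc.2 h.le), h.holds.deriv_eq]

lemma deriv_eq_zero_of_isMinOn (hT : 0 < T) (h : IsBVPSol B T p u u') {x : ℝ}
    (hx : x ∈ Icc 0 T) (hmin : IsMinOn u (Icc 0 T) x) : u' x = 0 := by
  have h0 : (0 : ℝ) ∈ Icc 0 T := left_mem_Icc.2 hT.le
  have hTT : T ∈ Icc 0 T := right_mem_Icc.2 hT.le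
  have hsign : ∀ z ∈ Icc 0 T, IsMinOn u (Icc 0 T) z → ∀ y ∈ Icc 0 T, 0 ≤ u' z * (y - z) :=
    fun z hz hminz y hy => mul_sub_nonneg_of_isMinOn_Icc hminz (h.hasDerivWithinAt z hz) hz hy
  have hends : IsMinOn u (Icc 0 T) 0 ∨ IsMinOn u (Icc 0 T) T → u' 0 = 0 ∧ u' T = 0 := by
    intro hend
    have hderiv := h.holds.deriv_eq
    have hB := h.holds
    cases B with
    | neumann => exact hB
    | periodic =>
      have hmin0 : IsMinOn u (Icc 0 T) 0 := by
        rcases hend with h0 | hT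
        · exact h0
        · exact fun y hy => (hB.1.trans_le (hT hy) : u 0 ≤ u y)
      have hminT : IsMinOn u (Icc 0 T) T := fun y hy =>
        (hB.1.symm.trans_le (hmin0 hy) : u T ≤ u y)
      have hl := hsign 0 h0 hmin0 T hTT
      have hr := hsign T hTT hminT 0 h0
      constructor <;> nlinarith
  rcases hx.1.eq_or_lt with rfl | hx0
  · exact (hends (.inl hmin)).1
  rcases hx.2.eq_or_lt with rfl | hxT
  · exact (hends (.inr hmin)).2
  have hl := hsign x hx hmin 0 h0
  have hr := hsign x hx hmin T hTT
  nlinarith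

lemma exists_deriv_eq_zero (hT : 0 < T) (h : IsBVPSol B T p u u') : ∃ x ∈ Icc 0 T, u' x = 0 := by
  obtain ⟨x, hx, hmin⟩ := isCompact_Icc.exists_isMinOn (nonempty_Icc.2 hT.le) h.continuousOn
  exact ⟨x, hx, h.deriv_eq_zero_of_isMinOn hT hx hmin⟩

lemma abs_deriv_le (hT : 0 < T) (h : IsBVPSol B T p u u') {x : ℝ} (hx : x ∈ Icc 0 T) :
    |u' x| ≤ ∫ t in (0 : ℝ)..T, |p t| := by
  obtain ⟨x₀, hx₀, hcrit⟩ := h.exists_deriv_eq_zero hT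
  rw [h.deriv_eq_sub hx₀ hx, hcrit, zero_sub, abs_neg]
  refine (intervalIntegral.norm_integral_le_integral_norm_uIoc (f := p)).trans ?_
  rw [intervalIntegral.integral_of_le hT.le]
  refine setIntegral_mono_set h.intervalIntegrable.1.norm
    (Eventually.of_forall fun _ => norm_nonneg _) (LE.le.eventuallyLE ?_)
  exact Ioc_subset_Ioc (le_min hx₀.1 hx.1) (max_le hx₀.2 hx.2)

lemma le_of_ae_nonpos (hT : 0 < T) (h : IsBVPSol B T p u u') {R : ℝ}
    (hp : ∀ᵐ x ∂volume.restrict (Icc 0 T), R < u x → p x ≤ 0) {x₁ : ℝ} (hx₁ : x₁ ∈ Icc 0 T)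
    (hux₁ : u x₁ ≤ R) : ∀ x ∈ Icc 0 T, u x ≤ R := by
  obtain ⟨x₀, hx₀, hmax⟩ := isCompact_Icc.exists_isMaxOn (nonempty_Icc.2 hT.le) h.continuousOn
  have hcrit : u' x₀ = 0 := neg_eq_zero.1 (h.neg.deriv_eq_zero_of_isMinOn hT hx₀ hmax.neg)
  suffices u x₀ ≤ R from fun x hx => (hmax hx).trans this
  by_contra! hRx₀
  have hK : IsCompact (Icc 0 T ∩ u ⁻¹' Iic R) := isCompact_Icc.of_isClosed_subset
    (h.continuousOn.preimage_isClosed_of_isClosed isClosed_Icc isClosed_Iic) inter_subset_left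
  obtain ⟨y, ⟨hy, hyR⟩, hdist⟩ := hK.exists_isMinOn (f := fun x => |x - x₀|) ⟨x₁, hx₁, hux₁⟩
    (continuous_id.sub continuous_const).abs.continuousOn
  have hsub : uIcc x₀ y ⊆ Icc 0 T := uIcc_subset_Icc hx₀ hy
  have habove : ∀ t ∈ uIcc x₀ y, t ≠ y → R < u t := by
    intro t ht hty
    by_contra! htR
    have hle : |y - x₀| ≤ |t - x₀| := hdist ⟨hsub ht, htR⟩
    grind [mem_uIcc]
  have hp' : 0 ≤ᵐ[volume.restrict (uIcc x₀ y)] fun t => -p t := by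
    filter_upwards [ae_restrict_of_ae_restrict_of_subset hsub hp,
      ae_restrict_of_ae (compl_mem_ae_iff.2 (measure_singleton y)),
      ae_restrict_mem measurableSet_uIcc] with t hpt hty ht
    exact neg_nonneg.2 (hpt (habove t ht hty))
  have hdouble := integral_integral_nonneg_of_ae hp'
  simp only [intervalIntegral.integral_neg] at hdouble
  have huy := h.eq_add_sub_integral hx₀ hy
  rw [hcrit, zero_mul] at huy
  linarith [show u y ≤ R from hyR]

lemma nonneg (hT : 0 < T) (h : IsBVPSol B T p u u') (hp : ∀ x ∈ Icc 0 T, u x < 0 → 0 < p x) :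
    ∀ x ∈ Icc 0 T, 0 ≤ u x := by
  obtain ⟨x₁, hx₁, hux₁⟩ : ∃ x ∈ Icc 0 T, 0 ≤ u x := by
    by_contra! hneg
    have hpos : 0 < ∫ t in (0 : ℝ)..T, p t :=
      intervalIntegral.intervalIntegral_pos_of_pos_on h.intervalIntegrable
        (fun x hx => hp x (Ioo_subset_Icc_self hx) (hneg x (Ioo_subset_Icc_self hx))) hT
    exact hpos.ne' h.integral_eq_zero
  have hle := h.neg.le_of_ae_nonpos hT (R := 0) ?_ hx₁ (neg_nonpos.2 hux₁)
  · exact fun x hx => neg_nonpos.1 (hle x hx)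
  · filter_upwards [ae_restrict_mem measurableSet_Icc] with x hx hux
    exact neg_nonpos.2 (hp x hx (neg_pos.1 hux)).le

lemma pos (hT : 0 < T) (h : IsBVPSol B T p u u') {k : ℝ → ℝ}
    (hk : IntervalIntegrable k volume 0 T) (hk0 : ∀ t, 0 ≤ k t)
    (hpu : ∀ x ∈ Icc 0 T, |p x| ≤ k x * |u x|) (hu : ∀ x ∈ Icc 0 T, 0 ≤ u x)
    (hne : ∃ x ∈ Icc 0 T, u x ≠ 0) : ∀ x ∈ Icc 0 T, 0 < u x := by
  refine fun x hx => (hu x hx).lt_of_ne' fun hux => ?_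
  obtain ⟨z, hz, huz⟩ := hne
  have hmin : IsMinOn u (Icc 0 T) x := fun y hy => (hux.trans_le (hu y hy) : u x ≤ u y)
  exact huz (h.eq_zero hk hk0 hpu hx hux (h.deriv_eq_zero_of_isMinOn hT hx hmin) z hz)

lemma comp_eq_zero_of_lipschitzOnWith (hT : 0 < T) {b G : ℝ → ℝ} {γ : NNReal} {s : Set ℝ}
    (h : IsBVPSol B T (fun t => b t * G (u t)) u u') (hb : IntervalIntegrable b volume 0 T)
    (hG : LipschitzOnWith γ G s) (hus : MapsTo u (Icc 0 T) s) (hGu : ∀ x ∈ Icc 0 T, 0 ≤ G (u x))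
    (hγ : γ * T * (∫ t in (0 : ℝ)..T, |b t|) ^ 2 < -∫ t in (0 : ℝ)..T, b t) :
    ∀ x ∈ Icc 0 T, G (u x) = 0 := by
  have hGuc : ContinuousOn (fun x => G (u x)) (Icc 0 T) :=
    hG.continuousOn.comp h.continuousOn hus
  obtain ⟨z, hz, hmax⟩ := isCompact_Icc.exists_isMaxOn (nonempty_Icc.2 hT.le) hGuc
  set A := ∫ t in (0 : ℝ)..T, |b t|
  set M := G (u z)
  have hA : 0 ≤ A := intervalIntegral.integral_nonneg hT.le fun _ _ => abs_nonneg _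
  have hderiv : ∀ x ∈ Icc 0 T, |u' x| ≤ A * M := by
    refine fun x hx => (h.abs_deriv_le hT hx).trans ?_
    rw [← intervalIntegral.integral_mul_const]
    refine intervalIntegral.integral_mono_on hT.le h.intervalIntegrable.abs
      (hb.abs.mul_const _) fun t ht => ?_
    rw [abs_mul, abs_of_nonneg (hGu t ht)]
    exact mul_le_mul_of_nonneg_left (hmax ht) (abs_nonneg _)
  have hosc : ∀ x ∈ Icc 0 T, |M - G (u x)| ≤ γ * (A * M * T) := fun x hx => calc
    |M - G (u x)| ≤ γ * |u z - u x| := hG.dist_le_mul _ (hus hz) _ (hus hx)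
    _ ≤ γ * (A * M * T) := by
      refine mul_le_mul_of_nonneg_left ((h.abs_sub_le hderiv hx hz).trans ?_) γ.2
      refine mul_le_mul_of_nonneg_left ?_ (mul_nonneg hA (hGu z hz))
      exact abs_sub_le_iff.2 ⟨by linarith [hx.1, hz.2], by linarith [hz.1, hx.2]⟩
  have hint : (∫ t in (0 : ℝ)..T, -b t * M) ≤ ∫ t in (0 : ℝ)..T,
      (|b t| * (γ * (A * M * T)) - b t * G (u t)) := by
    refine intervalIntegral.integral_mono_on hT.le (hb.neg.mul_const _)
      ((hb.abs.mul_const _).sub h.intervalIntegrable) fun t ht => ?_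
    have := (neg_abs_le (b t * (M - G (u t)))).trans' (neg_le_neg
      ((abs_mul _ _).trans_le (mul_le_mul_of_nonneg_left (hosc t ht) (abs_nonneg (b t)))))
    linarith
  rw [intervalIntegral.integral_sub (hb.abs.mul_const _) h.intervalIntegrable,
    h.integral_eq_zero, sub_zero, intervalIntegral.integral_mul_const,
    intervalIntegral.integral_mul_const, intervalIntegral.integral_neg] at hint
  have hM : M ≤ 0 := by
    by_contra! hM
    nlinarith [mul_lt_mul_of_pos_right hγ hM]
  exact fun x hx => le_antisymm ((hmax hx).trans hM) (hGu x hx)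

end IsBVPSol

end BoundaryValueProblem

section AprioriBound

variable {σ τ : ℝ} {a p q u u' φ φ' : ℝ → ℝ}

lemma div_mul_le_of_concaveOn {x z : ℝ} (hu : ConcaveOn ℝ (Icc σ τ) u)
    (hu0 : ∀ x ∈ Icc σ τ, 0 ≤ u x) (hστ : σ < τ) (hx : x ∈ Icc σ τ) (hz : z ∈ Icc σ τ) :
    (x - σ) * (τ - x) / (τ - σ) ^ 2 * u z ≤ u x := by
  set t := (x - σ) * (τ - x) / (τ - σ) ^ 2 with ht
  have hlen : 0 < τ - σ := sub_pos.2 hστ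
  have ht0 : 0 ≤ t :=
    div_nonneg (mul_nonneg (sub_nonneg.2 hx.1) (sub_nonneg.2 hx.2)) (by positivity)
  have htl : t * (τ - σ) ≤ x - σ := by
    rw [ht, div_mul_eq_mul_div, div_le_iff₀ (by positivity)]
    nlinarith [mul_nonneg (mul_nonneg (sub_nonneg.2 hx.1) hlen.le) (sub_nonneg.2 hx.1)]
  have htr : t * (τ - σ) ≤ τ - x := by
    rw [ht, div_mul_eq_mul_div, div_le_iff₀ (by positivity)]
    nlinarith [mul_nonneg (mul_nonneg (sub_nonneg.2 hx.2) hlen.le) (sub_nonneg.2 hx.2)]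
  have ht1 : 0 < 1 - t := by nlinarith
  -- `x` lies on the segment from `y ∈ [σ, τ]` to `z`, at parameter `t`.
  set y := (x - t * z) / (1 - t) with hy_def
  have hy : y ∈ Icc σ τ := by
    constructor
    · rw [le_div_iff₀ ht1]
      nlinarith [mul_le_mul_of_nonneg_left hz.2 ht0]
    · rw [div_le_iff₀ ht1]
      nlinarith [mul_le_mul_of_nonneg_left hz.1 ht0]
  have hconc := hu.2 hy hz ht1.le ht0 (sub_add_cancel 1 t)
  simp only [smul_eq_mul] at hconc
  rw [hy_def, mul_div_cancel₀ _ ht1.ne', sub_add_cancel] at hconc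
  linarith [mul_nonneg ht1.le (hu0 y hy)]

lemma IsSolOnIcc.concaveOn (h : IsSolOnIcc σ τ p u u')
    (hp : 0 ≤ᵐ[volume.restrict (Icc σ τ)] p) : ConcaveOn ℝ (Icc σ τ) u := by
  have hderiv : ∀ x ∈ Ioo σ τ, HasDerivAt u (u' x) x := fun x hx =>
    (h.hasDerivWithinAt x (Ioo_subset_Icc_self hx)).hasDerivAt (Icc_mem_nhds hx.1 hx.2)
  refine AntitoneOn.concaveOn_of_deriv (convex_Icc σ τ) h.continuousOn ?_ ?_ <;>
    rw [interior_Icc]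
  · exact fun x hx => (hderiv x hx).differentiableAt.differentiableWithinAt
  · intro x hx y hy hxy
    rw [(hderiv x hx).deriv, (hderiv y hy).deriv,
      h.deriv_eq_sub (Ioo_subset_Icc_self hx) (Ioo_subset_Icc_self hy), sub_le_self_iff]
    exact intervalIntegral.integral_nonneg_of_ae_restrict hxy
      (ae_restrict_of_ae_restrict_of_subset (Icc_subset_Icc hx.1.le hy.2.le) hp)

lemma integral_mul_le_of_eq_zero_endpoints (hστ : σ < τ) (h : IsSolOnIcc σ τ p u u')
    (hφ : IsSolOnIcc σ τ q φ φ') (hu0 : ∀ x ∈ Icc σ τ, 0 ≤ u x) (hφ0 : ∀ x ∈ Icc σ τ, 0 ≤ φ x)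
    (hφσ : φ σ = 0) (hφτ : φ τ = 0) :
    ∫ x in σ..τ, p x * φ x ≤ ∫ x in σ..τ, q x * u x := by
  have hσ : σ ∈ Icc σ τ := left_mem_Icc.2 hστ.le
  have hτ : τ ∈ Icc σ τ := right_mem_Icc.2 hστ.le
  have hminσ : IsMinOn φ (Icc σ τ) σ := fun x hx => (hφσ.trans_le (hφ0 x hx) : φ σ ≤ φ x)
  have hminτ : IsMinOn φ (Icc σ τ) τ := fun x hx => (hφτ.trans_le (hφ0 x hx) : φ τ ≤ φ x)
  have hφ'σ : 0 ≤ φ' σ := nonneg_of_mul_nonneg_left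
    (mul_sub_nonneg_of_isMinOn_Icc hminσ (hφ.hasDerivWithinAt σ hσ) hσ hτ) (sub_pos.2 hστ)
  have hφ'τ : φ' τ ≤ 0 := by
    have := mul_sub_nonneg_of_isMinOn_Icc hminτ (hφ.hasDerivWithinAt τ hτ) hτ hσ
    nlinarith
  have hgreen := h.integral_mul_sub_mul hφ
  rw [intervalIntegral.integral_sub
    (h.intervalIntegrable.mul_continuousOn (uIcc_of_le hστ.le ▸ hφ.continuousOn))
    (hφ.intervalIntegrable.mul_continuousOn (uIcc_of_le hστ.le ▸ h.continuousOn)),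
    hφσ, hφτ] at hgreen
  linarith [mul_nonneg (hu0 σ hσ) hφ'σ, mul_nonpos_of_nonneg_of_nonpos (hu0 τ hτ) hφ'τ]

lemma integral_mul_pos_of_ae_nonneg {w : ℝ → ℝ} (hστ : σ ≤ τ)
    (ha : IntervalIntegrable a volume σ τ) (ha0 : ∀ᵐ x ∂volume.restrict (Icc σ τ), 0 ≤ a x)
    (hane : ¬ ∀ᵐ x ∂volume.restrict (Icc σ τ), a x = 0) (hw : ContinuousOn w (Icc σ τ))
    (hw0 : ∀ x ∈ Ioo σ τ, 0 < w x) : 0 < ∫ x in σ..τ, a x * w x := by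
  have haw : IntervalIntegrable (fun x => a x * w x) volume σ τ :=
    ha.mul_continuousOn (uIcc_of_le hστ ▸ hw)
  rw [intervalIntegrable_iff_integrableOn_Ioo_of_le hστ] at haw
  have hnonneg : 0 ≤ᵐ[volume.restrict (Ioo σ τ)] fun x => a x * w x := by
    filter_upwards [ae_restrict_of_ae_restrict_of_subset Ioo_subset_Icc_self ha0,
      ae_restrict_mem measurableSet_Ioo] with x hax hx using mul_nonneg hax (hw0 x hx).le
  rw [intervalIntegral.integral_of_le hστ, integral_Ioc_eq_integral_Ioo]
  refine (integral_nonneg_of_ae hnonneg).lt_of_ne' fun hzero => hane ?_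
  rw [Measure.restrict_congr_set (Ioo_ae_eq_Icc (μ := volume)).symm]
  filter_upwards [(integral_eq_zero_iff_of_nonneg_ae hnonneg haw).1 hzero,
    ae_restrict_mem measurableSet_Ioo] with x hawx hx
  exact (mul_eq_zero.1 hawx).resolve_right (hw0 x hx).ne'

lemma DirichletEigenpair.exists_isSolOnIcc {lam : ℝ} (hστ : σ ≤ τ)
    (ha : IntervalIntegrable a volume σ τ) (h : DirichletEigenpair a σ τ lam) :
    ∃ φ φ' : ℝ → ℝ, IsSolOnIcc σ τ (fun t => lam * (a t * φ t)) φ φ' ∧ φ σ = 0 ∧ φ τ = 0 ∧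
      ∀ x ∈ Ioo σ τ, 0 < φ x := by
  obtain ⟨φ, φ', hderiv, -, hpos, hφσ, hφτ, heq⟩ := h
  have hφ : ContinuousOn φ (Icc σ τ) := fun x hx => (hderiv x hx).continuousWithinAt
  refine ⟨φ, φ', ⟨hστ, hderiv, ?_, fun x hx => ?_⟩, hφσ, hφτ, hpos⟩
  · exact (ha.mul_continuousOn (uIcc_of_le hστ ▸ hφ)).const_mul lam
  · rw [heq x hx, intervalIntegral.integral_const_mul]

lemma sub_mul_integral_le_of_dirichlet {lam L C : ℝ} (hστ : σ < τ)
    (ha : IntervalIntegrable a volume σ τ) (h : IsSolOnIcc σ τ p u u')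
    (hφ : IsSolOnIcc σ τ (fun t => lam * (a t * φ t)) φ φ') (hu0 : ∀ x ∈ Icc σ τ, 0 ≤ u x)
    (hφ0 : ∀ x ∈ Icc σ τ, 0 ≤ φ x) (hφσ : φ σ = 0) (hφτ : φ τ = 0)
    (hp : ∀ᵐ x ∂volume.restrict (Icc σ τ), a x * (L * u x - C) ≤ p x) :
    (L - lam) * ∫ x in σ..τ, a x * φ x * u x ≤ C * ∫ x in σ..τ, a x * φ x := by
  have huIcc := uIcc_of_le hστ.le
  have haφ : IntervalIntegrable (fun x => a x * φ x) volume σ τ :=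
    ha.mul_continuousOn (huIcc ▸ hφ.continuousOn)
  have haφu : IntervalIntegrable (fun x => a x * φ x * u x) volume σ τ :=
    haφ.mul_continuousOn (huIcc ▸ h.continuousOn)
  have hgreen := integral_mul_le_of_eq_zero_endpoints hστ h hφ hu0 hφ0 hφσ hφτ
  simp only [mul_assoc lam, intervalIntegral.integral_const_mul] at hgreen
  have hlower : ∫ x in σ..τ, (L * (a x * φ x * u x) - C * (a x * φ x)) ≤
      ∫ x in σ..τ, p x * φ x := by
    refine intervalIntegral.integral_mono_ae_restrict hστ.le
      ((haφu.const_mul _).sub (haφ.const_mul _))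
      (h.intervalIntegrable.mul_continuousOn (huIcc ▸ hφ.continuousOn)) ?_
    filter_upwards [hp, ae_restrict_mem measurableSet_Icc] with x hpx hx
    linarith [mul_le_mul_of_nonneg_right hpx (hφ0 x hx)]
  rw [intervalIntegral.integral_sub (haφu.const_mul _) (haφ.const_mul _),
    intervalIntegral.integral_const_mul, intervalIntegral.integral_const_mul] at hlower
  linarith

theorem exists_bound_of_dirichletEigenpair {lam L : ℝ} (C : ℝ)
    (ha : IntervalIntegrable a volume σ τ) (ha0 : ∀ᵐ x ∂volume.restrict (Icc σ τ), 0 ≤ a x)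
    (hane : ¬ ∀ᵐ x ∂volume.restrict (Icc σ τ), a x = 0) (hL : lam < L)
    (heig : DirichletEigenpair a σ τ lam) :
    ∃ R : ℝ, ∀ p u u' : ℝ → ℝ, IsSolOnIcc σ τ p u u' → (∀ x ∈ Icc σ τ, 0 ≤ u x) →
      (∀ᵐ x ∂volume.restrict (Icc σ τ), 0 ≤ p x) →
      (∀ᵐ x ∂volume.restrict (Icc σ τ), a x * (L * u x - C) ≤ p x) →
      ∀ x ∈ Icc σ τ, u x ≤ R := by
  have hστ : σ < τ := by
    by_contra! hτσ
    have hnull : volume (Icc σ τ) = 0 := by simp [hτσ]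
    exact hane (by simp [Measure.restrict_zero_set hnull])
  obtain ⟨φ, φ', hφ, hφσ, hφτ, hφpos⟩ := heig.exists_isSolOnIcc hστ.le ha
  have hφ0 : ∀ x ∈ Icc σ τ, 0 ≤ φ x := by
    intro x hx
    rcases eq_endpoints_or_mem_Ioo_of_mem_Icc hx with rfl | rfl | hx
    exacts [hφσ.ge, hφτ.ge, (hφpos x hx).le]
  set w : ℝ → ℝ := fun x => φ x * ((x - σ) * (τ - x) / (τ - σ) ^ 2)
  have hw : ContinuousOn w (Icc σ τ) := hφ.continuousOn.mul (by fun_prop)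
  have hQ : 0 < ∫ x in σ..τ, a x * w x :=
    integral_mul_pos_of_ae_nonneg hστ.le ha ha0 hane hw fun x hx => mul_pos (hφpos x hx)
      (div_pos (mul_pos (sub_pos.2 hx.1) (sub_pos.2 hx.2)) (pow_pos (sub_pos.2 hστ) 2))
  refine ⟨(C * ∫ x in σ..τ, a x * φ x) / ((L - lam) * ∫ x in σ..τ, a x * w x), ?_⟩
  intro p u u' h hu0 hp0 hp z hz
  have huIcc := uIcc_of_le hστ.le
  have hmean : (∫ x in σ..τ, a x * w x) * u z ≤ ∫ x in σ..τ, a x * φ x * u x := by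
    rw [← intervalIntegral.integral_mul_const]
    refine intervalIntegral.integral_mono_ae_restrict hστ.le
      ((ha.mul_continuousOn (huIcc ▸ hw)).mul_const _)
      ((ha.mul_continuousOn (huIcc ▸ hφ.continuousOn)).mul_continuousOn
        (huIcc ▸ h.continuousOn)) ?_
    filter_upwards [ha0, ae_restrict_mem measurableSet_Icc] with x hax hx
    calc a x * w x * u z = a x * φ x * ((x - σ) * (τ - x) / (τ - σ) ^ 2 * u z) := by ring
      _ ≤ a x * φ x * u x := mul_le_mul_of_nonneg_left
        (div_mul_le_of_concaveOn (h.concaveOn hp0) hu0 hστ hx hz) (mul_nonneg hax (hφ0 x hx))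
  rw [le_div_iff₀ (mul_pos (sub_pos.2 hL) hQ)]
  have hcomp := sub_mul_integral_le_of_dirichlet hστ ha h hφ hu0 hφ0 hφσ hφτ hp
  linarith [mul_le_mul_of_nonneg_left hmean (sub_pos.2 hL).le]

theorem exists_bound_of_isBVPSol {T L : ℝ} (hT : 0 < T) (C : ℝ) {ι : Type*} [Finite ι]
    [Nonempty ι] {σ τ : ι → ℝ} (ha : IntervalIntegrable a volume 0 T)
    (hIT : ∀ i, 0 ≤ σ i ∧ σ i ≤ τ i ∧ τ i ≤ T)
    (hapos : ∀ i, ∀ᵐ x ∂volume.restrict (Icc (σ i) (τ i)), 0 ≤ a x)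
    (hane : ∀ i, ¬ ∀ᵐ x ∂volume.restrict (Icc (σ i) (τ i)), a x = 0)
    (heig : ∀ i, ∃ lam < L, DirichletEigenpair a (σ i) (τ i) lam) :
    ∃ R : ℝ, ∀ B p u u', IsBVPSol B T p u u' → (∀ x ∈ Icc 0 T, 0 ≤ u x) →
      (∀ i, ∀ᵐ x ∂volume.restrict (Icc (σ i) (τ i)), 0 ≤ p x ∧ a x * (L * u x - C) ≤ p x) →
      (∀ᵐ x ∂volume.restrict (Icc 0 T \ ⋃ i, Icc (σ i) (τ i)), p x ≤ 0) →
      ∀ x ∈ Icc 0 T, u x ≤ R := by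
  have hsub : ∀ i, Icc (σ i) (τ i) ⊆ Icc 0 T := fun i => Icc_subset_Icc (hIT i).1 (hIT i).2.2
  have hσ : ∀ i, σ i ∈ Icc (σ i) (τ i) := fun i => left_mem_Icc.2 (hIT i).2.1
  have hτ : ∀ i, τ i ∈ Icc (σ i) (τ i) := fun i => right_mem_Icc.2 (hIT i).2.1
  choose lam hlam hpair using heig
  choose r hr using fun i => exists_bound_of_dirichletEigenpair C
    (intervalIntegrable_of_mem_Icc ha (hsub i (hσ i)) (hsub i (hτ i))) (hapos i) (hane i)
    (hlam i) (hpair i)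
  obtain ⟨R, hR⟩ := (finite_range r).bddAbove
  refine ⟨R, fun B p u u' h hu0 hp hp' => ?_⟩
  have hI : ∀ i, ∀ x ∈ Icc (σ i) (τ i), u x ≤ R := fun i x hx =>
    (hr i p u u' (h.toIsSolOnIcc.mono (hIT i).2.1 (hsub i)) (fun y hy => hu0 y (hsub i hy))
      ((hp i).mono fun _ => And.left) ((hp i).mono fun _ => And.right) x hx).trans
      (hR (mem_range_self i))
  obtain ⟨i₀⟩ := ‹Nonempty ι›
  refine h.le_of_ae_nonpos hT ?_ (hsub i₀ (hσ i₀)) (hI i₀ _ (hσ i₀))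
  have hmeas : MeasurableSet (⋃ i, Icc (σ i) (τ i)) :=
    (isClosed_iUnion_of_finite fun i => isClosed_Icc).measurableSet
  rw [ae_restrict_iff' (measurableSet_Icc.diff hmeas)] at hp'
  rw [ae_restrict_iff' measurableSet_Icc]
  filter_upwards [hp'] with x hpx hx hRx
  refine hpx ⟨hx, fun hmem => ?_⟩
  obtain ⟨i, hi⟩ := mem_iUnion.1 hmem
  exact hRx.not_ge (hI i x hi)

end AprioriBound

section ModifiedProblem

variable {B : BoundaryCond} {T ν : ℝ} {a G u u' v w : ℝ → ℝ}

/-- The nonlinearities treated on the whole line: nonnegative and vanishing for nonpositive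
arguments. -/
structure IsAdmissible (G : ℝ → ℝ) : Prop where
  nonneg : ∀ s, 0 ≤ G s
  eq_zero : ∀ s ≤ 0, G s = 0

/-- The right-hand side of the modified equation `u'' + a G(u) + u⁻ + ν a⁺ = 0`. The term `u⁻`
forces solutions of the boundary value problem to be nonnegative, and `ν a⁺` with `ν` large
excludes them. -/
noncomputable def modifiedTerm (a G : ℝ → ℝ) (ν t s : ℝ) : ℝ :=
  a t * G s + max (-s) 0 + ν * max (a t) 0

lemma modifiedTerm_of_nonneg {t s : ℝ} (hs : 0 ≤ s) :
    modifiedTerm a G ν t s = a t * G s + ν * max (a t) 0 := by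
  rw [modifiedTerm, max_eq_right (neg_nonpos.2 hs), add_zero]

lemma modifiedTerm_of_nonpos (hG : IsAdmissible G) {t s : ℝ} (hs : s ≤ 0) :
    modifiedTerm a G ν t s = -s + ν * max (a t) 0 := by
  rw [modifiedTerm, hG.eq_zero s hs, max_eq_left (neg_nonneg.2 hs), mul_zero, zero_add]

lemma modifiedTerm_eq_add (t s : ℝ) :
    modifiedTerm a G ν t s = modifiedTerm a G 0 t s + ν * max (a t) 0 := by
  rw [modifiedTerm, modifiedTerm, zero_mul, add_zero]

lemma abs_modifiedTerm_sub_le {K : NNReal} (hG : LipschitzWith K G) (t s s' : ℝ) :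
    |modifiedTerm a G ν t s - modifiedTerm a G ν t s'| ≤ (K * |a t| + 1) * |s - s'| := by
  have hneg : |max (-s) 0 - max (-s') 0| ≤ |s - s'| := by
    have := abs_max_sub_max_le_abs (-s) (-s') 0
    rwa [neg_sub_neg, abs_sub_comm s' s] at this
  have hmul : |a t * (G s - G s')| ≤ |a t| * (K * |s - s'|) := by
    rw [abs_mul]
    exact mul_le_mul_of_nonneg_left (hG.dist_le_mul s s') (abs_nonneg _)
  calc |modifiedTerm a G ν t s - modifiedTerm a G ν t s'|
      = |a t * (G s - G s') + (max (-s) 0 - max (-s') 0)| := by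
        rw [modifiedTerm, modifiedTerm]
        ring_nf
    _ ≤ (K * |a t| + 1) * |s - s'| := (abs_add_le _ _).trans (by linarith)

lemma intervalIntegrable_max_zero {c d : ℝ} (ha : IntervalIntegrable a volume c d) :
    IntervalIntegrable (fun t => max (a t) 0) volume c d :=
  ⟨ha.1.pos_part, ha.2.pos_part⟩

lemma intervalIntegrable_modifiedTerm (hT : 0 ≤ T) (ha : IntervalIntegrable a volume 0 T)
    (hG : Continuous G) (hv : ContinuousOn v (Icc 0 T)) :
    IntervalIntegrable (fun t => modifiedTerm a G ν t (v t)) volume 0 T := by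
  have hv' : ContinuousOn v (uIcc 0 T) := by rwa [uIcc_of_le hT]
  exact ((ha.mul_continuousOn (hG.comp_continuousOn hv')).add
    (by fun_prop : ContinuousOn (fun t => max (-v t) 0) (uIcc 0 T)).intervalIntegrable).add
      ((intervalIntegrable_max_zero ha).const_mul ν)

lemma IsBVPSol.nonneg_of_modifiedTerm (hG : IsAdmissible G) (hT : 0 < T) {θ : ℝ} (hθ : 0 < θ)
    (hν : 0 ≤ ν) (h : IsBVPSol B T (fun t => θ * modifiedTerm a G ν t (u t)) u u') :
    ∀ x ∈ Icc 0 T, 0 ≤ u x := by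
  refine h.nonneg hT fun x _ hux => mul_pos hθ ?_
  rw [modifiedTerm_of_nonpos hG hux.le]
  linarith [mul_nonneg hν (le_max_right (a x) 0)]

theorem exists_bound_of_modifiedTerm {L : ℝ} (hT : 0 < T) (C : ℝ) {ι : Type*} [Finite ι]
    [Nonempty ι] {σ τ : ι → ℝ} (ha : IntervalIntegrable a volume 0 T)
    (hIT : ∀ i, 0 ≤ σ i ∧ σ i ≤ τ i ∧ τ i ≤ T)
    (hapos : ∀ i, ∀ᵐ x ∂volume.restrict (Icc (σ i) (τ i)), 0 ≤ a x)
    (hane : ∀ i, ¬ ∀ᵐ x ∂volume.restrict (Icc (σ i) (τ i)), a x = 0)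
    (haneg : ∀ᵐ x ∂volume.restrict (Icc 0 T \ ⋃ i, Icc (σ i) (τ i)), a x ≤ 0)
    (heig : ∀ i, ∃ lam < L, DirichletEigenpair a (σ i) (τ i) lam) :
    ∃ R : ℝ, ∀ B G ν u u', IsAdmissible G → (∀ s, 0 ≤ s → L * s - C ≤ G s) → 0 ≤ ν →
      IsBVPSol B T (fun t => modifiedTerm a G ν t (u t)) u u' → ∀ x ∈ Icc 0 T, u x ≤ R := by
  obtain ⟨R, hR⟩ := exists_bound_of_isBVPSol hT C ha hIT hapos hane heig
  refine ⟨R, fun B G ν u u' hG hGL hν h => ?_⟩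
  have hu : ∀ x ∈ Icc 0 T, 0 ≤ u x :=
    IsBVPSol.nonneg_of_modifiedTerm hG hT one_pos hν (h.congr fun t _ => (one_mul _).symm)
  have hp := h.congr fun t ht => modifiedTerm_of_nonneg (hu t ht)
  refine hR B _ u u' hp hu (fun i => ?_) ?_
  · filter_upwards [hapos i, ae_restrict_mem measurableSet_Icc] with x hax hx
    have hux := hu x (Icc_subset_Icc (hIT i).1 (hIT i).2.2 hx)
    have hνa : 0 ≤ ν * max (a x) 0 := mul_nonneg hν (le_max_right _ _)
    exact ⟨add_nonneg (mul_nonneg hax (hG.nonneg _)) hνa,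
      (mul_le_mul_of_nonneg_left (hGL _ hux) hax).trans (le_add_of_nonneg_right hνa)⟩
  · filter_upwards [haneg] with x hax
    rw [max_eq_right hax, mul_zero, add_zero]
    exact mul_nonpos_of_nonpos_of_nonneg hax (hG.nonneg _)

lemma IsBVPSol.mul_integral_le {b : ℝ → ℝ} {M : ℝ} (ha : IntervalIntegrable a volume 0 T)
    (hw : ContinuousOn w (Icc 0 T)) (hwM : ∀ t ∈ Icc 0 T, |w t| ≤ M)
    (hb : IntervalIntegrable b volume 0 T)
    (h : IsBVPSol B T (fun t => a t * w t + ν * b t) u u') :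
    ν * ∫ t in (0 : ℝ)..T, b t ≤ (∫ t in (0 : ℝ)..T, |a t|) * M := by
  have haw : IntervalIntegrable (fun t => a t * w t) volume 0 T :=
    ha.mul_continuousOn (uIcc_of_le h.le ▸ hw)
  have hzero := h.integral_eq_zero
  rw [intervalIntegral.integral_add haw (hb.const_mul ν),
    intervalIntegral.integral_const_mul] at hzero
  rw [← intervalIntegral.integral_mul_const, eq_neg_of_add_eq_zero_right hzero,
    ← intervalIntegral.integral_neg]
  refine intervalIntegral.integral_mono_on h.le haw.neg (ha.abs.mul_const M) fun t ht => ?_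
  exact (neg_le_abs _).trans ((abs_mul _ _).trans_le
    (mul_le_mul_of_nonneg_left (hwM t ht) (abs_nonneg _)))

lemma IsBVPSol.abs_deriv_le_two_mul {b : ℝ → ℝ} {M : ℝ} (hT : 0 < T)
    (ha : IntervalIntegrable a volume 0 T)
    (hw : ContinuousOn w (Icc 0 T)) (hwM : ∀ t ∈ Icc 0 T, |w t| ≤ M)
    (hb : IntervalIntegrable b volume 0 T) (hν : 0 ≤ ν) (hb0 : ∀ t, 0 ≤ b t)
    (h : IsBVPSol B T (fun t => a t * w t + ν * b t) u u') {x : ℝ} (hx : x ∈ Icc 0 T) :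
    |u' x| ≤ 2 * ((∫ t in (0 : ℝ)..T, |a t|) * M) := calc
  |u' x| ≤ ∫ t in (0 : ℝ)..T, |a t * w t + ν * b t| := h.abs_deriv_le hT hx
  _ ≤ ∫ t in (0 : ℝ)..T, (|a t| * M + ν * b t) := by
    refine intervalIntegral.integral_mono_on hT.le h.intervalIntegrable.abs
      ((ha.abs.mul_const M).add (hb.const_mul ν)) fun t ht => (abs_add_le _ _).trans ?_
    rw [abs_mul, abs_of_nonneg (mul_nonneg hν (hb0 t))]
    gcongr
    exact hwM t ht
  _ ≤ 2 * ((∫ t in (0 : ℝ)..T, |a t|) * M) := by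
    rw [intervalIntegral.integral_add (ha.abs.mul_const M) (hb.const_mul ν),
      intervalIntegral.integral_const_mul, intervalIntegral.integral_mul_const, two_mul]
    exact add_le_add_right (h.mul_integral_le ha hw hwM hb) _

end ModifiedProblem

section Shooting

variable {B : BoundaryCond} {T ν : ℝ} {a G u u' : ℝ → ℝ} {K : NNReal}

/-- The quantity which, besides `u' 0 - u' T`, the boundary condition requires to vanish. -/
def BoundaryCond.defect : BoundaryCond → ℝ → (ℝ → ℝ) → (ℝ → ℝ) → ℝ
  | neumann, _, _, u' => u' 0
  | periodic, T, u, _ => u T - u 0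

lemma BoundaryCond.holds_iff : B.Holds T u u' ↔ u' 0 = u' T ∧ B.defect T u u' = 0 := by
  cases B <;> grind [Holds, defect]

/-- A continuous family of solutions of `u'' + θ (a G(u) + u⁻ + ν a⁺) = 0` on `[0, T]`, indexed by
`(θ, ν, z)` with initial data `u 0 = im z` and `u' 0 = re z`. Complex initial data let the
winding number of the boundary map detect solutions of the boundary value problem. -/
structure ShootingFamily (a G : ℝ → ℝ) (T : ℝ) where
  sol : unitInterval × ℝ × ℂ → ℝ → ℝ
  deriv : unitInterval × ℝ × ℂ → ℝ → ℝ
  isSolOnIcc : ∀ q, IsSolOnIcc 0 T (fun t => q.1 * modifiedTerm a G q.2.1 t (sol q t))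
    (sol q) (deriv q)
  sol_zero : ∀ q, sol q 0 = q.2.2.im
  deriv_zero : ∀ q, deriv q 0 = q.2.2.re
  continuous_sol : Continuous fun q : (unitInterval × ℝ × ℂ) × Icc 0 T => sol q.1 q.2
  continuous_integral : Continuous fun q => ∫ t in (0 : ℝ)..T, modifiedTerm a G q.2.1 t (sol q t)

lemma integral_integral_modifiedTerm (hT : 0 ≤ T) (ha : IntervalIntegrable a volume 0 T)
    (hG : Continuous G) {v : ℝ → ℝ} (hv : ContinuousOn v (Icc 0 T)) {x : ℝ} (hx : x ∈ Icc 0 T) :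
    ∫ s in (0 : ℝ)..x, ∫ t in (0 : ℝ)..s, modifiedTerm a G ν t (v t) =
      (∫ s in (0 : ℝ)..x, ∫ t in (0 : ℝ)..s, modifiedTerm a G 0 t (v t)) +
        ν * ∫ s in (0 : ℝ)..x, ∫ t in (0 : ℝ)..s, max (a t) 0 := by
  have h0 : (0 : ℝ) ∈ Icc 0 T := left_mem_Icc.2 hT
  have hf : IntervalIntegrable (fun t => modifiedTerm a G 0 t (v t)) volume 0 T :=
    intervalIntegrable_modifiedTerm hT ha hG hv
  have hb := intervalIntegrable_max_zero ha
  have hprim {p : ℝ → ℝ} (hp : IntervalIntegrable p volume 0 T) :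
      IntervalIntegrable (fun s => ∫ t in (0 : ℝ)..s, p t) volume 0 x :=
    intervalIntegrable_of_mem_Icc
      ((continuousOn_primitive_Icc hp h0).intervalIntegrable_of_Icc hT) h0 hx
  rw [← intervalIntegral.integral_const_mul,
    ← intervalIntegral.integral_add (hprim hf) ((hprim hb).const_mul ν)]
  refine intervalIntegral.integral_congr fun s hs => ?_
  have hs' := uIcc_subset_Icc h0 hx hs
  simp only [← intervalIntegral.integral_const_mul]
  rw [← intervalIntegral.integral_add (intervalIntegrable_of_mem_Icc hf h0 hs')
    ((intervalIntegrable_of_mem_Icc hb h0 hs').const_mul ν)]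
  simp only [← modifiedTerm_eq_add]

lemma continuous_integral_modifiedTerm (hT : 0 ≤ T) (ha : IntervalIntegrable a volume 0 T)
    (hG : LipschitzWith K G) : Continuous fun v : C(Icc 0 T, ℝ) =>
      ∫ t in (0 : ℝ)..T, modifiedTerm a G 0 t (IccExtend hT v t) := by
  have hint (v : C(Icc 0 T, ℝ)) := intervalIntegrable_modifiedTerm (ν := 0) hT ha hG.continuous
    (v.continuous.Icc_extend' (h := hT)).continuousOn
  have hk : IntervalIntegrable (fun t => K * |a t| + 1) volume 0 T :=
    (ha.abs.const_mul _).add intervalIntegrable_const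
  refine (LipschitzWith.of_dist_le' (α := C(Icc 0 T, ℝ)) (K := ∫ t in (0 : ℝ)..T, (K * |a t| + 1))
    fun v w => ?_).continuous
  rw [Real.dist_eq, ← intervalIntegral.integral_sub (hint v) (hint w),
    ← intervalIntegral.integral_mul_const]
  refine (intervalIntegral.abs_integral_le_integral_abs hT).trans
    (intervalIntegral.integral_mono_on hT ((hint v).sub (hint w)).abs (hk.mul_const _)
      fun t _ => (abs_modifiedTerm_sub_le hG t _ _).trans ?_)
  exact mul_le_mul_of_nonneg_left
    (ContinuousMap.dist_apply_le_dist (f := v) (g := w) (projIcc 0 T hT t)) (by positivity)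

lemma exists_continuous_shooting (hT : 0 ≤ T) (ha : IntervalIntegrable a volume 0 T)
    (hG : LipschitzWith K G) :
    ∃ S : unitInterval × ℝ × ℂ → C(Icc 0 T, ℝ), Continuous S ∧ ∀ q x,
      S q x = q.2.2.im + q.2.2.re * x - q.1 * ∫ s in (0 : ℝ)..x, ∫ t in (0 : ℝ)..s,
        modifiedTerm a G q.2.1 t (IccExtend hT (S q) t) := by
  have hk : IntervalIntegrable (fun t => K * |a t| + 1) volume 0 T :=
    (ha.abs.const_mul _).add intervalIntegrable_const
  obtain ⟨V, hV, hVeq⟩ := exists_continuous_volterra_solution hT hk (fun t => by positivity)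
    (N := fun v t => modifiedTerm a G 0 t (IccExtend hT v t))
    (fun v => intervalIntegrable_modifiedTerm hT ha hG.continuous
      (v.continuous.Icc_extend' (h := hT)).continuousOn)
    (fun v w t => by simpa using abs_modifiedTerm_sub_le hG t (v t) (w t))
  let X : C(Icc 0 T, ℝ) := ⟨Subtype.val, continuous_subtype_val⟩
  let J : C(Icc 0 T, ℝ) := ⟨fun x => ∫ s in (0 : ℝ)..x, ∫ t in (0 : ℝ)..s, max (a t) 0,
    (continuousOn_double_primitive (intervalIntegrable_max_zero ha) hT).domRestrict⟩
  refine ⟨fun q => V (q.1, q.2.2.im • 1 + q.2.2.re • X - ((q.1 : ℝ) * q.2.1) • J),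
    by fun_prop, fun q x => ?_⟩
  rw [integral_integral_modifiedTerm hT ha hG.continuous
    (ContinuousMap.continuous _).Icc_extend'.continuousOn x.2]
  have hX : X x = x := rfl
  have hJ : J x = ∫ s in (0 : ℝ)..x, ∫ t in (0 : ℝ)..s, max (a t) 0 := rfl
  refine (hVeq _ _ x).trans ?_
  rw [← hJ, mul_add, ← sub_sub, sub_right_comm]
  simp only [ContinuousMap.sub_apply, ContinuousMap.add_apply, ContinuousMap.smul_apply,
    ContinuousMap.one_apply, smul_eq_mul, mul_one, hX, mul_assoc]

lemma nonempty_shootingFamily (hT : 0 ≤ T) (ha : IntervalIntegrable a volume 0 T)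
    (hG : LipschitzWith K G) : Nonempty (ShootingFamily a G T) := by
  obtain ⟨S, hS, hSeq⟩ := exists_continuous_shooting hT ha hG
  have hint (q) : IntervalIntegrable (fun t => modifiedTerm a G q.2.1 t (IccExtend hT (S q) t))
      volume 0 T :=
    intervalIntegrable_modifiedTerm hT ha hG.continuous (S q).continuous.Icc_extend'.continuousOn
  have hsol (q) := IsSolOnIcc.of_eq_add_sub_integral hT ((hint q).const_mul q.1)
    (u := IccExtend hT (S q)) (y₀ := q.2.2.im) (y₁ := q.2.2.re) fun x hx => by
      rw [IccExtend_of_mem _ _ hx, hSeq]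
      simp only [sub_zero, intervalIntegral.integral_const_mul]
  refine ⟨⟨_, _, hsol, fun q => ?_, fun q => ?_, ?_, ?_⟩⟩
  · rw [IccExtend_of_mem _ _ (left_mem_Icc.2 hT), hSeq]
    simp
  · simp
  · simp only [IccExtend_val]
    fun_prop
  · have hsplit (q : unitInterval × ℝ × ℂ) := intervalIntegral.integral_add
      (intervalIntegrable_modifiedTerm (ν := 0) hT ha hG.continuous
        ((S q).continuous.Icc_extend' (h := hT)).continuousOn)
      ((intervalIntegrable_max_zero ha).const_mul q.2.1)
    simp only [← modifiedTerm_eq_add, intervalIntegral.integral_const_mul] at hsplit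
    simp only [hsplit]
    exact ((continuous_integral_modifiedTerm hT ha hG).comp hS).add (by fun_prop)

end Shooting

section Degree

variable {B : BoundaryCond} {T : ℝ} {a G u u' : ℝ → ℝ} {K γ : NNReal} {r R : ℝ}

lemma IsBVPSol.eq_zero_of_le (hT : 0 < T) (hGpos : ∀ s ∈ Ioc 0 r, 0 < G s) (hG0 : G 0 = 0)
    (hGγ : LipschitzOnWith γ G (Icc 0 r)) (ha : IntervalIntegrable a volume 0 T)
    (hγ : γ * T * (∫ t in (0 : ℝ)..T, |a t|) ^ 2 < -∫ t in (0 : ℝ)..T, a t)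
    {θ : ℝ} (hθ : 0 < θ) (hθ1 : θ ≤ 1) (h : IsBVPSol B T (fun t => θ * (a t * G (u t))) u u')
    (hu : ∀ x ∈ Icc 0 T, 0 ≤ u x) (hur : ∀ x ∈ Icc 0 T, u x ≤ r) :
    ∀ x ∈ Icc 0 T, u x = 0 ∧ u' x = 0 := by
  have hGu : ∀ x ∈ Icc 0 T, 0 ≤ G (u x) := fun x hx =>
    (hu x hx).eq_or_lt.elim (fun h0 => by rw [← h0, hG0]) fun h0 => (hGpos _ ⟨h0, hur x hx⟩).le
  have hzero : ∀ x ∈ Icc 0 T, G (u x) = 0 := by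
    refine (h.congr fun t _ => (mul_assoc θ _ _).symm).comp_eq_zero_of_lipschitzOnWith hT
      (ha.const_mul θ) hGγ (fun x hx => ⟨hu x hx, hur x hx⟩) hGu ?_
    simp only [abs_mul, abs_of_pos hθ, intervalIntegral.integral_const_mul]
    have hsq : 0 ≤ γ * T * (∫ t in (0 : ℝ)..T, |a t|) ^ 2 := by positivity
    nlinarith [mul_le_mul_of_nonneg_left hθ1 (mul_nonneg hθ.le hsq)]
  have hzero' : IsBVPSol B T (fun _ => 0) u u' := h.congr fun t ht => by simp [hzero t ht]
  intro x hx
  refine ⟨(hu x hx).eq_of_not_lt' fun hpos => (hGpos _ ⟨hpos, hur x hx⟩).ne' (hzero x hx), ?_⟩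
  simpa using hzero'.abs_deriv_le hT hx

namespace ShootingFamily

variable (Φ : ShootingFamily a G T)

/-- The boundary map of the shooting method, for the boundary condition `B`: its zeros are the
parameters whose solution satisfies `B`. The imaginary part is the integral of `a G(u) + u⁻ + ν a⁺`
without the factor `θ`, so that it stays informative at `θ = 0`. -/
noncomputable def boundaryMap (B : BoundaryCond) (q : unitInterval × ℝ × ℂ) : ℂ :=
  ⟨B.defect T (Φ.sol q) (Φ.deriv q), -∫ t in (0 : ℝ)..T, modifiedTerm a G q.2.1 t (Φ.sol q t)⟩

lemma continuous_boundaryMap (hT : 0 ≤ T) (B : BoundaryCond) : Continuous (Φ.boundaryMap B) := by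
  have hdefect : Continuous fun q => B.defect T (Φ.sol q) (Φ.deriv q) := by
    cases B with
    | neumann =>
      simp only [BoundaryCond.defect, Φ.deriv_zero]
      fun_prop
    | periodic =>
      exact (Φ.continuous_sol.comp (.prodMk_left ⟨T, right_mem_Icc.2 hT⟩)).sub
        (Φ.continuous_sol.comp (.prodMk_left ⟨0, left_mem_Icc.2 hT⟩))
  exact Complex.equivRealProdCLM.symm.continuous.comp
    (hdefect.prodMk Φ.continuous_integral.neg)

lemma isBVPSol (hT : 0 ≤ T) {q : unitInterval × ℝ × ℂ} (hq : Φ.boundaryMap B q = 0) :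
    IsBVPSol B T (fun t => q.1 * modifiedTerm a G q.2.1 t (Φ.sol q t)) (Φ.sol q) (Φ.deriv q) := by
  refine ⟨Φ.isSolOnIcc q, BoundaryCond.holds_iff.2 ⟨?_, congrArg Complex.re hq⟩⟩
  rw [(Φ.isSolOnIcc q).deriv_eq T (right_mem_Icc.2 hT), intervalIntegral.integral_const_mul,
    neg_eq_zero.1 (congrArg Complex.im hq), mul_zero, sub_zero]

lemma eq_zero_of_sol_le (hT : 0 < T) (hG : IsAdmissible G) (hGpos : ∀ s ∈ Ioc 0 r, 0 < G s)
    (hGγ : LipschitzOnWith γ G (Icc 0 r)) (ha : IntervalIntegrable a volume 0 T)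
    (hγ : γ * T * (∫ t in (0 : ℝ)..T, |a t|) ^ 2 < -∫ t in (0 : ℝ)..T, a t)
    {θ : unitInterval} (hθ : 0 < θ) {z : ℂ} (hz : Φ.boundaryMap B (θ, 0, z) = 0)
    (hr : ∀ x ∈ Icc 0 T, Φ.sol (θ, 0, z) x ≤ r) : z = 0 := by
  have h := Φ.isBVPSol hT.le hz
  have hnonneg := h.nonneg_of_modifiedTerm hG hT hθ le_rfl
  have hsol := h.congr (q := fun t => θ * (a t * G (Φ.sol (θ, 0, z) t))) fun t ht => by
    simp only [modifiedTerm_of_nonneg (hnonneg t ht), zero_mul, add_zero]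
  obtain ⟨him, hre⟩ := hsol.eq_zero_of_le hT hGpos (hG.eq_zero 0 le_rfl) hGγ ha hγ hθ θ.2.2
    hnonneg hr 0 (left_mem_Icc.2 hT.le)
  exact Complex.ext ((Φ.deriv_zero _).symm.trans hre) ((Φ.sol_zero _).symm.trans him)

lemma sol_eq_zero (hT : 0 ≤ T) (hG : IsAdmissible G) (hGK : LipschitzWith K G)
    (ha : IntervalIntegrable a volume 0 T) (θ : unitInterval) {x : ℝ} (hx : x ∈ Icc 0 T) :
    Φ.sol (θ, 0, 0) x = 0 := by
  have hk : IntervalIntegrable (fun t => K * |a t| + 1) volume 0 T :=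
    (ha.abs.const_mul _).add intervalIntegrable_const
  refine (Φ.isSolOnIcc (θ, 0, 0)).eq_zero hk (fun t => by positivity) (fun t _ => ?_)
    (left_mem_Icc.2 hT) (by simp [Φ.sol_zero])
    (by simp [Φ.deriv_zero]) x hx
  have hlip := abs_modifiedTerm_sub_le (a := a) (ν := 0) hGK t (Φ.sol (θ, 0, 0) t) 0
  rw [modifiedTerm_of_nonpos hG le_rfl, neg_zero, zero_mul, add_zero, sub_zero, sub_zero] at hlip
  rw [abs_mul, abs_of_nonneg θ.2.1]
  exact (mul_le_of_le_one_left (abs_nonneg _) θ.2.2).trans hlip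

lemma exists_radius (hT : 0 ≤ T) (hG : IsAdmissible G) (hGK : LipschitzWith K G)
    (ha : IntervalIntegrable a volume 0 T) (hr : 0 < r) :
    ∃ ρ ∈ Ioc 0 r, ∀ z : ℂ, ‖z‖ = ρ → ∀ θ, ∀ x ∈ Icc 0 T, Φ.sol (θ, 0, z) x ≤ r := by
  have hcont : Continuous fun q : ℂ × unitInterval × Icc 0 T => Φ.sol (q.2.1, 0, q.1) q.2.2 :=
    Φ.continuous_sol.comp (by fun_prop : Continuous fun q : ℂ × unitInterval × Icc 0 T =>
      (((q.2.1, 0, q.1) : unitInterval × ℝ × ℂ), q.2.2))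
  have hnear := isCompact_univ.eventually_forall_of_forall_eventually (x₀ := (0 : ℂ))
    (P := fun z (p : unitInterval × Icc 0 T) => Φ.sol (p.1, 0, z) p.2 < r) fun p _ => by
      refine hcont.continuousAt.eventually_lt continuousAt_const ?_
      rwa [Φ.sol_eq_zero hT hG hGK ha p.1 p.2.2]
  obtain ⟨ε, hε, hball⟩ := Metric.eventually_nhds_iff.1 hnear
  refine ⟨min (ε / 2) r, ⟨by positivity, min_le_right _ _⟩, fun z hz θ x hx => ?_⟩
  refine (hball (y := z) ?_ (θ, ⟨x, hx⟩) (mem_univ _)).le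
  rw [dist_zero_right, hz]
  exact (min_le_left _ _).trans_lt (half_lt_self hε)

lemma sol_at_zero {ν : ℝ} {z : ℂ} {x : ℝ} (hx : x ∈ Icc 0 T) :
    Φ.sol (0, ν, z) x = z.im + z.re * x := by
  have h := (Φ.isSolOnIcc (0, ν, z)).eq_add_sub_integral
    (left_mem_Icc.2 (hx.1.trans hx.2)) hx
  simpa [Φ.sol_zero, Φ.deriv_zero] using h

lemma exists_defect_eq_mul_re (hT : 0 < T) (B : BoundaryCond) :
    ∃ κ > 0, ∀ z, (Φ.boundaryMap B (0, 0, z)).re = κ * z.re := by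
  have hTT : T ∈ Icc 0 T := right_mem_Icc.2 hT.le
  cases B with
  | neumann => exact ⟨1, one_pos, fun z => by simp [boundaryMap, BoundaryCond.defect, Φ.deriv_zero]⟩
  | periodic =>
    refine ⟨T, hT, fun z => ?_⟩
    simp [boundaryMap, BoundaryCond.defect, Φ.sol_zero, Φ.sol_at_zero hTT, mul_comm]

lemma im_mul_im_boundaryMap_pos (hT : 0 < T) (hG : IsAdmissible G)
    (hGpos : ∀ s ∈ Ioc 0 r, 0 < G s) (ha : IntervalIntegrable a volume 0 T)
    (ha2 : ∫ t in (0 : ℝ)..T, a t < 0) {z : ℂ} (hre : z.re = 0) (him : z.im ≠ 0)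
    (hz : ‖z‖ ≤ r) : 0 < z.im * (Φ.boundaryMap B (0, 0, z)).im := by
  have hF : (Φ.boundaryMap B (0, 0, z)).im =
      -((∫ t in (0 : ℝ)..T, a t) * G z.im + T * max (-z.im) 0) := by
    have hconst : ∫ t in (0 : ℝ)..T, modifiedTerm a G 0 t (Φ.sol (0, 0, z) t) =
        ∫ t in (0 : ℝ)..T, (a t * G z.im + max (-z.im) 0) := by
      refine intervalIntegral.integral_congr fun t ht => ?_
      rw [uIcc_of_le hT.le] at ht
      simp only [modifiedTerm, Φ.sol_at_zero ht, hre, zero_mul, add_zero]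
    rw [boundaryMap, hconst, intervalIntegral.integral_add (ha.mul_const _)
      intervalIntegrable_const, intervalIntegral.integral_mul_const,
      intervalIntegral.integral_const, sub_zero, smul_eq_mul]
  rw [hF]
  rcases him.lt_or_gt with hneg | hpos
  · rw [hG.eq_zero _ hneg.le, max_eq_left (neg_nonneg.2 hneg.le), mul_zero, zero_add]
    nlinarith [mul_pos hT (mul_pos_of_neg_of_neg hneg hneg)]
  · rw [max_eq_right (neg_nonpos.2 hpos.le), mul_zero, add_zero, ← neg_mul]
    exact mul_pos hpos (mul_pos (neg_pos.2 ha2)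
      (hGpos _ ⟨hpos, (le_abs_self _).trans ((Complex.abs_im_le_norm z).trans hz)⟩))

lemma lineMap_boundaryMap_ne_zero (hT : 0 < T) (hG : IsAdmissible G)
    (hGpos : ∀ s ∈ Ioc 0 r, 0 < G s) (ha : IntervalIntegrable a volume 0 T)
    (ha2 : ∫ t in (0 : ℝ)..T, a t < 0) {z : ℂ} (hz0 : z ≠ 0) (hz : ‖z‖ ≤ r)
    {s : ℝ} (hs : s ∈ Icc (0 : ℝ) 1) :
    AffineMap.lineMap z (Φ.boundaryMap B (0, 0, z)) s ≠ 0 := by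
  intro h
  simp only [AffineMap.lineMap_apply_module, Complex.ext_iff, Complex.add_re, Complex.add_im,
    Complex.real_smul, Complex.re_ofReal_mul, Complex.im_ofReal_mul, Complex.zero_re,
    Complex.zero_im] at h
  have hconvex : ∀ {x y : ℝ}, 0 < x → 0 < y → (1 - s) * x + s * y ≠ 0 := fun hx hy =>
    ((convex_Ioi (0 : ℝ)) hx hy (sub_nonneg.2 hs.2) hs.1 (sub_add_cancel 1 s)).ne'
  obtain ⟨κ, hκ, hdefect⟩ := Φ.exists_defect_eq_mul_re hT B
  have hre : z.re = 0 := by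
    refine (mul_eq_zero.1 ?_).resolve_left (hconvex one_pos hκ)
    rw [hdefect] at h
    linarith [h.1]
  have him : z.im ≠ 0 := fun him => hz0 (Complex.ext hre him)
  refine hconvex (mul_self_pos.2 him)
    (Φ.im_mul_im_boundaryMap_pos (B := B) hT hG hGpos ha ha2 hre him hz) ?_
  linear_combination z.im * h.2

end ShootingFamily

end Degree

section LipschitzExistence

variable {B : BoundaryCond} {T : ℝ} {a G : ℝ → ℝ} {K γ : NNReal} {r R : ℝ}

namespace ShootingFamily

variable (Φ : ShootingFamily a G T)

lemma not_hasContinuousLog_boundaryMap_zero (hT : 0 < T) (hG : IsAdmissible G)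
    (hGpos : ∀ s ∈ Ioc 0 r, 0 < G s) (ha : IntervalIntegrable a volume 0 T)
    (ha2 : ∫ t in (0 : ℝ)..T, a t < 0) {ρ : ℝ} (hρ : ρ ∈ Ioc 0 r) :
    ¬ HasContinuousLog fun z : Circle => Φ.boundaryMap B (0, 0, ρ * z) := by
  have hcont := Φ.continuous_boundaryMap hT.le B
  intro hlog
  refine not_hasContinuousLog_ofReal_mul_coe ρ ?_
  simpa only [AffineMap.lineMap_apply_zero] using HasContinuousLog.of_joinedIn
    (H := fun p : ℝ × Circle =>
      AffineMap.lineMap ((ρ : ℂ) * p.2) (Φ.boundaryMap B (0, 0, ρ * p.2)) p.1)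
    (by simp only [AffineMap.lineMap_apply_module]; fun_prop)
    (fun s hs z => by
      have hz := norm_ofReal_mul_circle hρ.1.le z
      exact Φ.lineMap_boundaryMap_ne_zero hT hG hGpos ha ha2
        (norm_pos_iff.1 (hρ.1.trans_eq hz.symm)) (hz.trans_le hρ.2) hs)
    (((convex_Icc (0 : ℝ) 1).isPathConnected ⟨0, by simp⟩).joinedIn 1 (by simp) 0 (by simp))
    (by simpa only [AffineMap.lineMap_apply_one] using hlog)

lemma not_hasContinuousLog_boundaryMap_one (hT : 0 < T) (hG : IsAdmissible G)
    (hGpos : ∀ s ∈ Ioc 0 r, 0 < G s) (hGγ : LipschitzOnWith γ G (Icc 0 r))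
    (ha : IntervalIntegrable a volume 0 T)
    (hγ : γ * T * (∫ t in (0 : ℝ)..T, |a t|) ^ 2 < -∫ t in (0 : ℝ)..T, a t) {ρ : ℝ}
    (hρ : ρ ∈ Ioc 0 r)
    (hr : ∀ z : ℂ, ‖z‖ = ρ → ∀ θ, ∀ x ∈ Icc 0 T, Φ.sol (θ, 0, z) x ≤ r) :
    ¬ HasContinuousLog fun z : Circle => Φ.boundaryMap B (1, 0, ρ * z) := by
  have hcont := Φ.continuous_boundaryMap hT.le B
  have ha2 : ∫ t in (0 : ℝ)..T, a t < 0 :=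
    neg_pos.1 (lt_of_le_of_lt (by positivity) hγ)
  refine fun hlog => Φ.not_hasContinuousLog_boundaryMap_zero (B := B) hT hG hGpos ha ha2 hρ ?_
  refine HasContinuousLog.of_joinedIn
    (H := fun p : unitInterval × Circle => Φ.boundaryMap B (p.1, 0, ρ * p.2)) (by fun_prop)
    (S := univ) (fun θ _ z hzero => ?_)
    ⟨⟨⟨unitInterval.symm, by fun_prop⟩, unitInterval.symm_zero, unitInterval.symm_one⟩, by simp⟩
    hlog
  have hz := norm_ofReal_mul_circle hρ.1.le z
  have hz0 : (ρ : ℂ) * z ≠ 0 := norm_pos_iff.1 (hρ.1.trans_eq hz.symm)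
  rcases eq_or_ne θ 0 with rfl | hθ
  · refine Φ.lineMap_boundaryMap_ne_zero (B := B) hT hG hGpos ha ha2 hz0 (hz.trans_le hρ.2)
      (right_mem_Icc.2 zero_le_one) ?_
    rwa [AffineMap.lineMap_apply_one]
  · exact hz0 (Φ.eq_zero_of_sol_le hT hG hGpos hGγ ha hγ (unitInterval.pos_iff_ne_zero.2 hθ)
      hzero (hr _ hz θ))

lemma le_of_boundaryMap_eq_zero (hT : 0 < T) (hG : IsAdmissible G) (hGK : LipschitzWith K G)
    (ha : IntervalIntegrable a volume 0 T)
    (hR : ∀ ν u u', 0 ≤ ν → IsBVPSol B T (fun t => modifiedTerm a G ν t (u t)) u u' →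
      ∀ x ∈ Icc 0 T, u x ≤ R) {ν : ℝ} (hν : 0 ≤ ν) {z : ℂ}
    (hz : Φ.boundaryMap B (1, ν, z) = 0) :
    ν * ∫ t in (0 : ℝ)..T, max (a t) 0 ≤ (∫ t in (0 : ℝ)..T, |a t|) * (K * R) ∧
      ‖z‖ ≤ 2 * ((∫ t in (0 : ℝ)..T, |a t|) * (K * R)) + R := by
  have h0 : (0 : ℝ) ∈ Icc 0 T := left_mem_Icc.2 hT.le
  set u := Φ.sol (1, ν, z)
  have h := Φ.isBVPSol hT.le hz
  have hnonneg : ∀ x ∈ Icc 0 T, 0 ≤ u x := h.nonneg_of_modifiedTerm hG hT one_pos hν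
  have hle : ∀ x ∈ Icc 0 T, u x ≤ R := hR ν _ _ hν (h.congr fun t _ => one_mul _)
  have hsol := h.congr (q := fun t => a t * G (u t) + ν * max (a t) 0) fun t ht =>
    (one_mul _).trans (modifiedTerm_of_nonneg (hnonneg t ht))
  have hGu : ContinuousOn (fun t => G (u t)) (Icc 0 T) :=
    hGK.continuous.comp_continuousOn h.continuousOn
  have hGuR : ∀ t ∈ Icc 0 T, |G (u t)| ≤ K * R := fun t ht => by
    have hlip := hGK.dist_le_mul (u t) 0
    rw [hG.eq_zero 0 le_rfl, Real.dist_0_eq_abs, Real.dist_0_eq_abs,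
      abs_of_nonneg (hnonneg t ht)] at hlip
    exact hlip.trans (mul_le_mul_of_nonneg_left (hle t ht) K.2)
  have hb := intervalIntegrable_max_zero ha
  refine ⟨hsol.mul_integral_le ha hGu hGuR hb, (Complex.norm_le_abs_re_add_abs_im z).trans
    (add_le_add ?_ ?_)⟩
  · rw [← Φ.deriv_zero (1, ν, z)]
    exact hsol.abs_deriv_le_two_mul hT ha hGu hGuR hb hν (fun t => le_max_right _ _) h0
  · rw [← Φ.sol_zero (1, ν, z), abs_of_nonneg (hnonneg 0 h0)]
    exact hle 0 h0

lemma hasContinuousLog_boundaryMap (hT : 0 < T) (hG : IsAdmissible G) (hGK : LipschitzWith K G)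
    (ha : IntervalIntegrable a volume 0 T) (ha0 : 0 < ∫ t in (0 : ℝ)..T, max (a t) 0)
    (hR : ∀ ν u u', 0 ≤ ν → IsBVPSol B T (fun t => modifiedTerm a G ν t (u t)) u u' →
      ∀ x ∈ Icc 0 T, u x ≤ R) {ρ : ℝ} (hρ0 : 0 ≤ ρ)
    (hρ : 2 * ((∫ t in (0 : ℝ)..T, |a t|) * (K * R)) + R < ρ) :
    HasContinuousLog fun z : Circle => Φ.boundaryMap B (1, 0, ρ * z) := by
  have hcont := Φ.continuous_boundaryMap hT.le B
  obtain ⟨ν, hν, hν0⟩ : ∃ ν, (∫ t in (0 : ℝ)..T, |a t|) * (K * R) <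
      ν * ∫ t in (0 : ℝ)..T, max (a t) 0 ∧ 0 ≤ ν :=
    (((tendsto_id.atTop_mul_const ha0).eventually_gt_atTop _).and (eventually_ge_atTop 0)).exists
  have hne : ∀ z, Φ.boundaryMap B (1, ν, z) ≠ 0 := fun z hz =>
    hν.not_ge (Φ.le_of_boundaryMap_eq_zero hT hG hGK ha hR hν0 hz).1
  refine HasContinuousLog.of_joinedIn
    (H := fun p : ℝ × Circle => Φ.boundaryMap B (1, p.1, ρ * p.2)) (by fun_prop)
    (S := Ici 0) (fun ν' hν' z hz => ?_)
    (((convex_Ici (0 : ℝ)).isPathConnected ⟨0, self_mem_Ici⟩).joinedIn ν hν0 0 self_mem_Ici)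
    ((HasContinuousLog.of_forall_ne_zero (by fun_prop) hne).comp (by fun_prop))
  have hnorm := (Φ.le_of_boundaryMap_eq_zero hT hG hGK ha hR hν' hz).2
  rw [norm_ofReal_mul_circle hρ0] at hnorm
  exact hρ.not_ge hnorm

end ShootingFamily

theorem exists_isBVPSol_of_lipschitzWith (hT : 0 < T) (hG : IsAdmissible G)
    (hGK : LipschitzWith K G) (hr : 0 < r) (hGpos : ∀ s ∈ Ioc 0 r, 0 < G s)
    (hGγ : LipschitzOnWith γ G (Icc 0 r)) (ha : IntervalIntegrable a volume 0 T)
    (ha0 : 0 < ∫ t in (0 : ℝ)..T, max (a t) 0)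
    (hγ : γ * T * (∫ t in (0 : ℝ)..T, |a t|) ^ 2 < -∫ t in (0 : ℝ)..T, a t)
    (hR : ∀ ν u u', 0 ≤ ν → IsBVPSol B T (fun t => modifiedTerm a G ν t (u t)) u u' →
      ∀ x ∈ Icc 0 T, u x ≤ R) :
    ∃ u u', IsBVPSol B T (fun t => a t * G (u t)) u u' ∧ (∀ x ∈ Icc 0 T, u x ∈ Icc 0 R) ∧
      ∃ x ∈ Icc 0 T, r < u x := by
  obtain ⟨Φ⟩ := nonempty_shootingFamily hT.le ha hGK
  obtain ⟨ρ, hρ, hsmall⟩ := Φ.exists_radius hT.le hG hGK ha hr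
  obtain ⟨ρ', hρρ', hρ'⟩ : ∃ ρ', ρ ≤ ρ' ∧ 2 * ((∫ t in (0 : ℝ)..T, |a t|) * (K * R)) + R < ρ' :=
    ((eventually_ge_atTop ρ).and (eventually_gt_atTop _)).exists
  have hcont := Φ.continuous_boundaryMap hT.le B
  obtain ⟨z, hρz, hz⟩ := exists_eq_zero_of_hasContinuousLog_circle
    (f := fun z => Φ.boundaryMap B (1, 0, z)) (by fun_prop) hρ.1.le hρρ'
    (Φ.not_hasContinuousLog_boundaryMap_one hT hG hGpos hGγ ha hγ hρ hsmall)
    (Φ.hasContinuousLog_boundaryMap hT hG hGK ha ha0 hR (hρ.1.le.trans hρρ') hρ')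
  have h := Φ.isBVPSol hT.le hz
  have hnonneg := h.nonneg_of_modifiedTerm hG hT one_pos le_rfl
  refine ⟨_, _, h.congr fun t ht => ?_, fun x hx => ⟨hnonneg x hx, ?_⟩, ?_⟩
  · simp only [modifiedTerm_of_nonneg (hnonneg t ht), Icc.coe_one, one_mul, zero_mul,
      add_zero]
  · exact hR 0 _ _ le_rfl (h.congr fun t _ => one_mul _) x hx
  · by_contra! hle
    refine (norm_pos_iff.1 (hρ.1.trans_le hρz)) ?_
    exact Φ.eq_zero_of_sol_le hT hG hGpos hGγ ha hγ one_pos hz hle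

end LipschitzExistence

section Limit

variable {B : BoundaryCond} {T c d r R : ℝ} {a k q w w' : ℝ → ℝ} {p u u' : ℕ → ℝ → ℝ}

lemma exists_tendstoUniformlyOn_subseq {α β : Type*} [PseudoMetricSpace α] [MetricSpace β]
    {s : Set α} (hs : IsCompact s) {t : Set β} (ht : IsCompact t) {C : NNReal} {f : ℕ → α → β}
    (hf : ∀ n, LipschitzOnWith C (f n) s) (hft : ∀ n, MapsTo (f n) s t) :
    ∃ φ : ℕ → ℕ, StrictMono φ ∧ ∃ w, TendstoUniformlyOn (fun n => f (φ n)) w atTop s := by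
  have : CompactSpace s := isCompact_iff_compactSpace.1 hs
  let F (n : ℕ) : BoundedContinuousFunction s β :=
    .mkOfCompact ⟨s.domRestrict (f n), (hf n).continuousOn.domRestrict⟩
  let S : Set (BoundedContinuousFunction s β) := range F
  have hS : IsCompact (closure S) := by
    refine BoundedContinuousFunction.arzela_ascoli t ht S ?_ ?_
    · rintro _ x ⟨n, rfl⟩
      exact hft n x.2
    · refine (LipschitzWith.uniformEquicontinuous _ C ?_).equicontinuous
      rintro ⟨_, n, rfl⟩
      exact (hf n).to_restrict
  obtain ⟨v, -, φ, hφ, hlim⟩ := hS.tendsto_subseq fun n => subset_closure (mem_range_self n)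
  refine ⟨φ, hφ, Function.extend Subtype.val v (f 0), ?_⟩
  rw [tendstoUniformlyOn_iff_tendstoUniformly_comp_coe,
    show Function.extend Subtype.val v (f 0) ∘ Subtype.val = v from
      funext fun x => Subtype.val_injective.extend_apply _ _ x]
  exact BoundedContinuousFunction.tendsto_iff_tendstoUniformly.1 hlim

lemma tendsto_integral_of_abs_le (hk : IntervalIntegrable k volume c d)
    (hp : ∀ n, IntervalIntegrable (p n) volume c d) (hpk : ∀ n, ∀ t ∈ Icc c d, |p n t| ≤ k t)
    (hpq : ∀ t ∈ Icc c d, Tendsto (p · t) atTop (nhds (q t))) {x : ℝ} (hx : x ∈ Icc c d) :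
    Tendsto (fun n => ∫ t in c..x, p n t) atTop (nhds (∫ t in c..x, q t)) := by
  have hc : c ∈ Icc c d := left_mem_Icc.2 (hx.1.trans hx.2)
  have hsub : uIoc c x ⊆ Icc c d := uIoc_subset_uIcc.trans (uIcc_subset_Icc hc hx)
  exact intervalIntegral.tendsto_integral_filter_of_dominated_convergence k
    (Eventually.of_forall fun n =>
      (intervalIntegrable_of_mem_Icc (hp n) hc hx).def'.aestronglyMeasurable)
    (Eventually.of_forall fun n => ae_of_all _ fun t ht => hpk n t (hsub ht))
    (intervalIntegrable_of_mem_Icc hk hc hx) (ae_of_all _ fun t ht => hpq t (hsub ht))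

lemma intervalIntegrable_of_tendsto_of_abs_le (hcd : c ≤ d) (hk : IntervalIntegrable k volume c d)
    (hp : ∀ n, IntervalIntegrable (p n) volume c d) (hpk : ∀ n, ∀ t ∈ Icc c d, |p n t| ≤ k t)
    (hpq : ∀ t ∈ Icc c d, Tendsto (p · t) atTop (nhds (q t))) :
    IntervalIntegrable q volume c d := by
  have hmem : ∀ᵐ t ∂volume.restrict (uIoc c d), t ∈ Icc c d := by
    filter_upwards [ae_restrict_mem measurableSet_uIoc] with t ht
    exact Ioc_subset_Icc_self (uIoc_of_le hcd ▸ ht)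
  refine hk.mono_fun' (aestronglyMeasurable_of_tendsto_ae atTop
    (fun n => (hp n).def'.aestronglyMeasurable) ?_) ?_
  · filter_upwards [hmem] with t ht using hpq t ht
  · filter_upwards [hmem] with t ht
    exact le_of_tendsto' (hpq t ht).norm fun n => hpk n t ht

lemma IsSolOnIcc.exists_of_tendsto (hcd : c < d) (h : ∀ n, IsSolOnIcc c d (p n) (u n) (u' n))
    (hk : IntervalIntegrable k volume c d) (hpk : ∀ n, ∀ t ∈ Icc c d, |p n t| ≤ k t)
    (hpq : ∀ t ∈ Icc c d, Tendsto (p · t) atTop (nhds (q t)))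
    (huw : ∀ t ∈ Icc c d, Tendsto (u · t) atTop (nhds (w t))) :
    ∃ w', IsSolOnIcc c d q w w' ∧ ∀ t ∈ Icc c d, Tendsto (u' · t) atTop (nhds (w' t)) := by
  have hc : c ∈ Icc c d := left_mem_Icc.2 hcd.le
  have hd : d ∈ Icc c d := right_mem_Icc.2 hcd.le
  have hp (n) := (h n).intervalIntegrable
  have hint : ∀ x ∈ Icc c d, Tendsto (fun n => ∫ t in c..x, p n t) atTop
      (nhds (∫ t in c..x, q t)) := fun x hx => tendsto_integral_of_abs_le hk hp hpk hpq hx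
  have hbound : ∀ n, ∀ x ∈ Icc c d, |∫ t in c..x, p n t| ≤ ∫ t in c..d, k t := fun n x hx => by
    refine (intervalIntegral.norm_integral_le_of_norm_le (f := p n) (g := k) hx.1
      (ae_of_all _ fun t ht => hpk n t ⟨ht.1.le, ht.2.trans hx.2⟩)
      (intervalIntegrable_of_mem_Icc hk hc hx)).trans ?_
    refine intervalIntegral.integral_mono_interval le_rfl hx.1 hx.2 ?_ hk
    filter_upwards [ae_restrict_mem measurableSet_Ioc] with t ht
    exact (abs_nonneg _).trans (hpk n t (Ioc_subset_Icc_self ht))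
  have hint₂ : ∀ x ∈ Icc c d, Tendsto (fun n => ∫ s in c..x, ∫ t in c..s, p n t) atTop
      (nhds (∫ s in c..x, ∫ t in c..s, q t)) := fun x hx =>
    tendsto_integral_of_abs_le (k := fun _ => ∫ t in c..d, k t) intervalIntegrable_const
      (fun n => (continuousOn_primitive_Icc (hp n) hc).intervalIntegrable_of_Icc hcd.le)
      hbound hint hx
  have hslope : ∀ n, u' n c = (u n d - u n c + ∫ s in c..d, ∫ t in c..s, p n t) / (d - c) :=
    fun n => by
      rw [eq_div_iff (sub_pos.2 hcd).ne', (h n).eq_add_sub_integral hc hd]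
      ring
  have hu'c := (((huw d hd).sub (huw c hc)).add (hint₂ d hd)).div_const (d - c)
  simp only [← hslope] at hu'c
  refine ⟨_, .of_eq_add_sub_integral hcd.le
    (intervalIntegrable_of_tendsto_of_abs_le hcd.le hk hp hpk hpq) fun x hx =>
      tendsto_nhds_unique (huw x hx)
        ((((huw c hc).add (hu'c.mul_const (x - c))).sub (hint₂ x hx)).congr fun n =>
          ((h n).eq_add_sub_integral hc hx).symm), fun x hx => ?_⟩
  exact (hu'c.sub (hint x hx)).congr fun n => ((h n).deriv_eq x hx).symm

lemma BoundaryCond.Holds.of_tendsto (hT : 0 ≤ T) (h : ∀ n, B.Holds T (u n) (u' n))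
    (huw : ∀ t ∈ Icc 0 T, Tendsto (u · t) atTop (nhds (w t)))
    (huw' : ∀ t ∈ Icc 0 T, Tendsto (u' · t) atTop (nhds (w' t))) : B.Holds T w w' := by
  have h0 : (0 : ℝ) ∈ Icc 0 T := left_mem_Icc.2 hT
  have hTT : T ∈ Icc 0 T := right_mem_Icc.2 hT
  have hconst {v : ℕ → ℝ} {y z : ℝ} (hv : Tendsto v atTop (nhds y)) (hz : ∀ n, v n = z) : y = z :=
    tendsto_nhds_unique hv (tendsto_const_nhds.congr fun n => (hz n).symm)
  cases B with
  | neumann => exact ⟨hconst (huw' 0 h0) fun n => (h n).1, hconst (huw' T hTT) fun n => (h n).2⟩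
  | periodic =>
    exact ⟨tendsto_nhds_unique (huw 0 h0) ((huw T hTT).congr fun n => (h n).1.symm),
      tendsto_nhds_unique (huw' 0 h0) ((huw' T hTT).congr fun n => (h n).2.symm)⟩

theorem exists_isBVPSol_of_tendsto {G : ℕ → ℝ → ℝ} {g : ℝ → ℝ} {M : ℝ} (hT : 0 < T)
    (ha : IntervalIntegrable a volume 0 T) (hr : 0 < r)
    (hGM : ∀ n, ∀ s ∈ Icc 0 R, |G n s| ≤ M)
    (hGg : ∀ s, Tendsto (fun z : ℕ × ℝ => G z.1 z.2) (atTop ×ˢ nhds s) (nhds (g s)))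
    (hsol : ∀ n, ∃ u u', IsBVPSol B T (fun t => a t * G n (u t)) u u' ∧
      (∀ x ∈ Icc 0 T, u x ∈ Icc 0 R) ∧ ∃ x ∈ Icc 0 T, r < u x) :
    ∃ w w', IsBVPSol B T (fun t => a t * g (w t)) w w' ∧ (∀ x ∈ Icc 0 T, w x ∈ Icc 0 R) ∧
      ∃ x ∈ Icc 0 T, w x ≠ 0 := by
  choose u u' hu huR y hy hry using hsol
  have hpk : ∀ n, ∀ t ∈ Icc 0 T, |a t * G n (u n t)| ≤ |a t| * M := fun n t ht => by
    rw [abs_mul]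
    exact mul_le_mul_of_nonneg_left (hGM n _ (huR n t ht)) (abs_nonneg _)
  have hk : IntervalIntegrable (fun t => |a t| * M) volume 0 T := ha.abs.mul_const M
  have hderiv : ∀ n, ∀ x ∈ Icc 0 T, |u' n x| ≤ ∫ t in (0 : ℝ)..T, |a t| * M := fun n x hx =>
    ((hu n).abs_deriv_le hT hx).trans
      (intervalIntegral.integral_mono_on hT.le (hu n).intervalIntegrable.abs hk (hpk n))
  have hlip : ∀ n, LipschitzOnWith (∫ t in (0 : ℝ)..T, |a t| * M).toNNReal (u n) (Icc 0 T) :=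
    fun n => (convex_Icc 0 T).lipschitzOnWith_of_nnnorm_hasDerivWithin_le
      (hu n).hasDerivWithinAt fun x hx =>
        NNReal.coe_le_coe.1 ((hderiv n x hx).trans (Real.le_coe_toNNReal _))
  obtain ⟨φ, hφ, w, hw⟩ := exists_tendstoUniformlyOn_subseq isCompact_Icc isCompact_Icc hlip huR
  have huw : ∀ t ∈ Icc 0 T, Tendsto (fun n => u (φ n) t) atTop (nhds (w t)) :=
    fun t ht => hw.tendsto_at ht
  obtain ⟨w', hsol, huw'⟩ := IsSolOnIcc.exists_of_tendsto hT
    (fun n => (hu (φ n)).toIsSolOnIcc) hk (fun n => hpk (φ n))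
    (fun t ht => ((hGg (w t)).comp (hφ.tendsto_atTop.prodMk (huw t ht))).const_mul (a t)) huw
  refine ⟨w, w', ⟨hsol, .of_tendsto hT.le (fun n => (hu (φ n)).holds) huw huw'⟩,
    fun x hx => isClosed_Icc.mem_of_tendsto (huw x hx) (Eventually.of_forall fun n => huR _ x hx),
    ?_⟩
  obtain ⟨n, hn⟩ := (Metric.tendstoUniformlyOn_iff.1 hw r hr).exists
  refine ⟨y (φ n), hy _, fun hzero => ?_⟩
  have hdist := hn _ (hy (φ n))
  rw [hzero, dist_zero_left, Real.norm_eq_abs] at hdist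
  exact hdist.not_ge ((hry (φ n)).le.trans (le_abs_self _))

end Limit

section LipschitzEnvelope

variable {α : Type*} [PseudoMetricSpace α] {f : α → ℝ} {K : NNReal} {c : ℝ} {x : α}

/-- The largest `K`-Lipschitz function below `f`, i.e. the infimal convolution of `f` with
`K * dist`. It is meaningful when `f` is bounded below; the infimum is `0` where it diverges. -/
noncomputable def lipschitzEnvelope (f : α → ℝ) (K : NNReal) (x : α) : ℝ :=
  ⨅ y, f y + K * dist x y

lemma lipschitzEnvelope_le (hf : ∀ y, 0 ≤ f y) (K : NNReal) (x y : α) :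
    lipschitzEnvelope f K x ≤ f y + K * dist x y :=
  ciInf_le ⟨0, forall_mem_range.2 fun z => add_nonneg (hf z) (by positivity)⟩ y

lemma lipschitzEnvelope_le_self (hf : ∀ y, 0 ≤ f y) (K : NNReal) (x : α) :
    lipschitzEnvelope f K x ≤ f x := by
  simpa only [dist_self, mul_zero, add_zero] using lipschitzEnvelope_le hf K x x

lemma le_lipschitzEnvelope (h : ∀ y, c ≤ f y + K * dist x y) : c ≤ lipschitzEnvelope f K x :=
  have : Nonempty α := ⟨x⟩
  le_ciInf h

lemma lipschitzEnvelope_nonneg (hf : ∀ y, 0 ≤ f y) (K : NNReal) (x : α) :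
    0 ≤ lipschitzEnvelope f K x :=
  le_lipschitzEnvelope fun y => add_nonneg (hf y) (by positivity)

lemma lipschitzEnvelope_eq_self {γ : NNReal} {x₀ : α} {r : ℝ} (hf : ∀ y, 0 ≤ f y)
    (hf₀ : f x₀ = 0) (hfγ : LipschitzOnWith γ f (Metric.closedBall x₀ r)) (hγK : γ ≤ K)
    (hr : 0 ≤ r) (hx : x ∈ Metric.closedBall x₀ (r / 2)) : lipschitzEnvelope f K x = f x := by
  have hxr : x ∈ Metric.closedBall x₀ r := Metric.closedBall_subset_closedBall (half_le_self hr) hx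
  have hdist : ∀ {s t : ℝ}, 0 ≤ t → s ≤ t → γ * s ≤ K * t := fun {s t} ht hst =>
    (mul_le_mul_of_nonneg_left hst γ.coe_nonneg).trans (mul_le_mul_of_nonneg_right hγK ht)
  refine (lipschitzEnvelope_le_self hf K x).antisymm (le_lipschitzEnvelope fun y => ?_)
  by_cases hy : y ∈ Metric.closedBall x₀ r
  · exact (hfγ.le_add_mul hxr hy).trans (add_le_add_right (hdist dist_nonneg le_rfl) _)
  · have hxy : dist x x₀ ≤ dist x y := by
      have := dist_triangle_left y x₀ x
      rw [Metric.mem_closedBall] at hx hy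
      linarith
    have hfx : f x ≤ γ * dist x x₀ := by
      simpa only [hf₀, zero_add] using hfγ.le_add_mul hxr (Metric.mem_closedBall_self hr)
    exact hfx.trans ((hdist dist_nonneg hxy).trans (le_add_of_nonneg_left (hf y)))

lemma lipschitzWith_lipschitzEnvelope (hf : ∀ y, 0 ≤ f y) (K : NNReal) :
    LipschitzWith K (lipschitzEnvelope f K) := by
  refine LipschitzWith.of_le_add_mul K fun x z => ?_
  rw [← sub_le_iff_le_add]
  refine le_lipschitzEnvelope fun y => ?_
  have hy := lipschitzEnvelope_le hf K x y
  have htri := mul_le_mul_of_nonneg_left (dist_triangle x z y) K.coe_nonneg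
  linarith

theorem tendsto_lipschitzEnvelope {ι : Type*} {l : Filter ι} {k : ι → NNReal}
    (hf : ∀ y, 0 ≤ f y) (hfx : ContinuousAt f x) (hk : Tendsto k l atTop) :
    Tendsto (fun z : ι × α => lipschitzEnvelope f (k z.1) z.2) (l ×ˢ nhds x) (nhds (f x)) := by
  have hupper : Tendsto (fun z : ι × α => f z.2) (l ×ˢ nhds x) (nhds (f x)) :=
    hfx.tendsto.comp tendsto_snd
  refine tendsto_order.2 ⟨fun c hc => ?_, fun c hc => ?_⟩
  · obtain ⟨b, hcb, hbx⟩ := exists_between hc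
    obtain ⟨δ, hδ, hball⟩ := Metric.eventually_nhds_iff.1 (hfx.eventually (lt_mem_nhds hbx))
    have hlarge : ∀ᶠ i in l, b ≤ k i * (δ / 2) :=
      ((NNReal.tendsto_coe_atTop.2 hk).atTop_mul_const (half_pos hδ)).eventually_ge_atTop b
    filter_upwards [hlarge.prod_mk (Metric.ball_mem_nhds x (half_pos hδ))] with z hz
    refine hcb.trans_le (le_lipschitzEnvelope fun y => ?_)
    rcases lt_or_ge (dist y x) δ with hy | hy
    · exact (hball hy).le.trans (le_add_of_nonneg_right (by positivity))
    · have hfar : δ / 2 ≤ dist z.2 y := by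
        have := dist_triangle_left y x z.2
        linarith [Metric.mem_ball.1 hz.2]
      have := mul_le_mul_of_nonneg_left hfar (k z.1).coe_nonneg
      linarith [hf y, hz.1]
  · filter_upwards [hupper.eventually_lt_const hc] with z hz
    exact (lipschitzEnvelope_le_self hf _ _).trans_lt hz

end LipschitzEnvelope

section PositiveSolutions

variable {B : BoundaryCond} {T C L r R : ℝ} {a g G : ℝ → ℝ} {γ : NNReal}

lemma isAdmissible_comp_max (hg : ∀ s, 0 ≤ s → 0 ≤ g s) (hg0 : g 0 = 0) :
    IsAdmissible fun s => g (max s 0) where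
  nonneg s := hg _ (le_max_right s 0)
  eq_zero s hs := by rw [max_eq_right hs, hg0]

namespace IsAdmissible

lemma comp_max (hG : IsAdmissible G) (s : ℝ) : G (max s 0) = G s := by
  rcases le_total s 0 with hs | hs
  · rw [max_eq_right hs, hG.eq_zero s hs, hG.eq_zero 0 le_rfl]
  · rw [max_eq_left hs]

lemma lipschitzOnWith_closedBall (hG : IsAdmissible G) (hr : 0 ≤ r)
    (hGγ : LipschitzOnWith γ G (Icc 0 r)) : LipschitzOnWith γ G (Metric.closedBall 0 r) := by
  have hmaps : MapsTo (fun s => max s 0) (Metric.closedBall 0 r) (Icc 0 r) := fun s hs =>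
    ⟨le_max_right s 0, max_le (le_of_abs_le (mem_closedBall_zero_iff.1 hs)) hr⟩
  simpa only [mul_one, Function.comp_def, id, hG.comp_max] using
    hGγ.comp (LipschitzWith.id.max_const 0).lipschitzOnWith hmaps

lemma affine_le_lipschitzEnvelope (hG : IsAdmissible G) (hGL : ∀ s, 0 ≤ s → L * s - C ≤ G s)
    {K : NNReal} (hLK : ‖L‖₊ ≤ K) {s : ℝ} (hs : 0 ≤ s) : L * s - C ≤ lipschitzEnvelope G K s := by
  refine le_lipschitzEnvelope fun y => ?_
  have hy := hGL _ (le_max_right y 0)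
  rw [hG.comp_max] at hy
  have hdist : |s - max y 0| ≤ dist s y := by
    simpa only [max_eq_left hs, Real.dist_eq] using abs_max_sub_max_le_abs s y 0
  have hL : L * (s - max y 0) ≤ K * dist s y :=
    (le_abs_self _).trans ((abs_mul _ _).trans_le
      (mul_le_mul hLK hdist (abs_nonneg _) K.coe_nonneg))
  linarith

lemma lipschitzEnvelope (hG : IsAdmissible G) (K : NNReal) :
    IsAdmissible (lipschitzEnvelope G K) where
  nonneg := lipschitzEnvelope_nonneg hG.nonneg K
  eq_zero s hs := ((lipschitzEnvelope_le_self hG.nonneg K s).trans_eq (hG.eq_zero s hs)).antisymm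
    (lipschitzEnvelope_nonneg hG.nonneg K s)

end IsAdmissible

lemma exists_abs_le_mul (hg : ContinuousOn g (Icc 0 R)) (hg0 : g 0 = 0) (hr : 0 < r)
    (hgγ : LipschitzOnWith γ g (Icc 0 r)) : ∃ c : ℝ, 0 ≤ c ∧ ∀ s ∈ Icc 0 R, |g s| ≤ c * s := by
  obtain ⟨M, hM⟩ := isCompact_Icc.exists_bound_of_continuousOn hg
  refine ⟨max (γ : ℝ) (M / r), le_max_of_le_left γ.coe_nonneg, fun s hs => ?_⟩
  rcases le_total s r with hsr | hrs
  · have hlip := hgγ.dist_le_mul s ⟨hs.1, hsr⟩ 0 ⟨le_rfl, hr.le⟩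
    rw [hg0, dist_zero_right, dist_zero_right, Real.norm_eq_abs, Real.norm_of_nonneg hs.1] at hlip
    exact hlip.trans (mul_le_mul_of_nonneg_right (le_max_left _ _) hs.1)
  · have hM0 : 0 ≤ M / r := div_nonneg ((norm_nonneg _).trans (hM s hs)) hr.le
    calc |g s| ≤ M / r * r := by rw [div_mul_cancel₀ M hr.ne']; exact hM s hs
      _ ≤ M / r * s := mul_le_mul_of_nonneg_left hrs hM0
      _ ≤ max (γ : ℝ) (M / r) * s := mul_le_mul_of_nonneg_right (le_max_right _ _) hs.1

lemma integral_max_zero_pos {σ τ : ℝ} (ha : IntervalIntegrable a volume 0 T)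
    (hστ : 0 ≤ σ ∧ σ ≤ τ ∧ τ ≤ T) (hapos : ∀ᵐ x ∂volume.restrict (Icc σ τ), 0 ≤ a x)
    (hane : ¬ ∀ᵐ x ∂volume.restrict (Icc σ τ), a x = 0) :
    0 < ∫ t in (0 : ℝ)..T, max (a t) 0 := by
  obtain ⟨hσ, hle, hτ⟩ := hστ
  have ha' : IntervalIntegrable a volume σ τ :=
    intervalIntegrable_of_mem_Icc ha ⟨hσ, hle.trans hτ⟩ ⟨hσ.trans hle, hτ⟩
  calc 0 < ∫ t in σ..τ, a t * 1 :=
        integral_mul_pos_of_ae_nonneg (w := fun _ => 1) hle ha' hapos hane continuousOn_const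
          fun _ _ => one_pos
    _ ≤ ∫ t in σ..τ, max (a t) 0 :=
        intervalIntegral.integral_mono_on hle (ha'.mul_const 1) (intervalIntegrable_max_zero ha')
          fun t _ => (mul_one (a t)).trans_le (le_max_left _ _)
    _ ≤ ∫ t in (0 : ℝ)..T, max (a t) 0 :=
        intervalIntegral.integral_mono_interval hσ hle hτ
          (Eventually.of_forall fun _ => le_max_right _ _) (intervalIntegrable_max_zero ha)

lemma exists_isBVPSol_lipschitzEnvelope {K : NNReal} (hT : 0 < T) (hG : IsAdmissible G) (hr : 0 < r)
    (hGpos : ∀ s ∈ Ioc 0 r, 0 < G s) (hGγ : LipschitzOnWith γ G (Icc 0 r))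
    (hGL : ∀ s, 0 ≤ s → L * s - C ≤ G s) (ha : IntervalIntegrable a volume 0 T)
    (ha0 : 0 < ∫ t in (0 : ℝ)..T, max (a t) 0)
    (hγ : γ * T * (∫ t in (0 : ℝ)..T, |a t|) ^ 2 < -∫ t in (0 : ℝ)..T, a t)
    (hR : ∀ H ν u u', IsAdmissible H → (∀ s, 0 ≤ s → L * s - C ≤ H s) → 0 ≤ ν →
      IsBVPSol B T (fun t => modifiedTerm a H ν t (u t)) u u' → ∀ x ∈ Icc 0 T, u x ≤ R)
    (hγK : γ ≤ K) (hLK : ‖L‖₊ ≤ K) :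
    ∃ u u', IsBVPSol B T (fun t => a t * lipschitzEnvelope G K (u t)) u u' ∧
      (∀ x ∈ Icc 0 T, u x ∈ Icc 0 R) ∧ ∃ x ∈ Icc 0 T, r / 2 < u x := by
  have hhalf : r / 2 ≤ r := half_le_self hr.le
  have hself : EqOn (lipschitzEnvelope G K) G (Icc 0 (r / 2)) := fun s hs =>
    lipschitzEnvelope_eq_self hG.nonneg (hG.eq_zero 0 le_rfl)
      (hG.lipschitzOnWith_closedBall hr.le hGγ) hγK hr.le
      (mem_closedBall_zero_iff.2 ((Real.norm_of_nonneg hs.1).trans_le hs.2))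
  have hlip : LipschitzOnWith γ (lipschitzEnvelope G K) (Icc 0 (r / 2)) := fun s hs t ht => by
    rw [hself hs, hself ht]
    exact hGγ.mono (Icc_subset_Icc_right hhalf) hs ht
  exact exists_isBVPSol_of_lipschitzWith hT (hG.lipschitzEnvelope K)
    (lipschitzWith_lipschitzEnvelope hG.nonneg K) (half_pos hr)
    (fun s hs => (hself (Ioc_subset_Icc_self hs)).symm ▸ hGpos s ⟨hs.1, hs.2.trans hhalf⟩)
    hlip ha ha0 hγ fun ν u u' => hR _ ν u u' (hG.lipschitzEnvelope K)
      fun s hs => hG.affine_le_lipschitzEnvelope hGL hLK hs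

theorem exists_pos_isBVPSol {ι : Type*} [Finite ι] [Nonempty ι] {σ τ : ι → ℝ} (hT : 0 < T)
    (hG : IsAdmissible G) (hGc : Continuous G) (hr : 0 < r) (hGpos : ∀ s ∈ Ioc 0 r, 0 < G s)
    (hGγ : LipschitzOnWith γ G (Icc 0 r)) (hGL : ∀ s, 0 ≤ s → L * s - C ≤ G s)
    (ha : IntervalIntegrable a volume 0 T)
    (hγ : γ * T * (∫ t in (0 : ℝ)..T, |a t|) ^ 2 < -∫ t in (0 : ℝ)..T, a t)
    (hIT : ∀ i, 0 ≤ σ i ∧ σ i ≤ τ i ∧ τ i ≤ T)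
    (hapos : ∀ i, ∀ᵐ x ∂volume.restrict (Icc (σ i) (τ i)), 0 ≤ a x)
    (hane : ∀ i, ¬ ∀ᵐ x ∂volume.restrict (Icc (σ i) (τ i)), a x = 0)
    (haneg : ∀ᵐ x ∂volume.restrict (Icc 0 T \ ⋃ i, Icc (σ i) (τ i)), a x ≤ 0)
    (heig : ∀ i, ∃ lam < L, DirichletEigenpair a (σ i) (τ i) lam) :
    ∃ u u', IsBVPSol B T (fun t => a t * G (u t)) u u' ∧ ∀ x ∈ Icc 0 T, 0 < u x := by
  obtain ⟨R, hR⟩ := exists_bound_of_modifiedTerm hT C ha hIT hapos hane haneg heig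
  obtain ⟨c, hc0, hc⟩ := exists_abs_le_mul (R := R) hGc.continuousOn (hG.eq_zero 0 le_rfl) hr hGγ
  let K (n : ℕ) : NNReal := max γ ‖L‖₊ + n
  have hγK (n) : γ ≤ K n := (le_max_left _ _).trans (le_add_of_nonneg_right n.cast_nonneg)
  have hLK (n) : ‖L‖₊ ≤ K n := (le_max_right _ _).trans (le_add_of_nonneg_right n.cast_nonneg)
  have hKtop : Tendsto K atTop atTop :=
    tendsto_atTop_mono (fun _ => le_add_of_nonneg_left zero_le) tendsto_natCast_atTop_atTop
  let i : ι := Classical.arbitrary ι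
  have ha0 := integral_max_zero_pos ha (hIT i) (hapos i) (hane i)
  have hbound : ∀ n, ∀ s ∈ Icc 0 R, |lipschitzEnvelope G (K n) s| ≤ c * R := fun n s hs => by
    rw [abs_of_nonneg ((hG.lipschitzEnvelope (K n)).nonneg s)]
    calc lipschitzEnvelope G (K n) s ≤ G s := lipschitzEnvelope_le_self hG.nonneg (K n) s
      _ ≤ c * s := (le_abs_self _).trans (hc s hs)
      _ ≤ c * R := mul_le_mul_of_nonneg_left hs.2 hc0
  obtain ⟨u, u', hu, huR, hne⟩ := exists_isBVPSol_of_tendsto hT ha (half_pos hr) hbound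
    (fun s => tendsto_lipschitzEnvelope hG.nonneg hGc.continuousAt hKtop)
    fun n => exists_isBVPSol_lipschitzEnvelope hT hG hr hGpos hGγ hGL ha ha0 hγ (hR B)
      (hγK n) (hLK n)
  refine ⟨u, u', hu, hu.pos hT (k := fun t => |a t| * c) (ha.abs.mul_const c)
    (fun t => mul_nonneg (abs_nonneg _) hc0) (fun x hx => ?_) (fun x hx => (huR x hx).1) hne⟩
  rw [abs_mul, mul_assoc, abs_of_nonneg (huR x hx).1]
  exact mul_le_mul_of_nonneg_left (hc _ (huR x hx)) (abs_nonneg _)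

end PositiveSolutions

section Nonlinearity

variable {L : ℝ} {g : ℝ → ℝ}

lemma exists_affine_le_of_lt_growthLiminf (hg : ∀ s, 0 ≤ s → 0 ≤ g s)
    (hL : (L : EReal) < GrowthLiminf g) : ∃ C, ∀ s, 0 ≤ s → L * s - C ≤ g s := by
  obtain ⟨S, hS⟩ := eventually_atTop.1 (eventually_lt_of_lt_liminf hL)
  refine ⟨|L| * max S 1, fun s hs => ?_⟩
  rcases le_total (max S 1) s with hSs | hsS
  · have hslope : L < g s / s := EReal.coe_lt_coe_iff.1 (hS s ((le_max_left S 1).trans hSs))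
    rw [lt_div_iff₀ (one_pos.trans_le ((le_max_right S 1).trans hSs))] at hslope
    have : 0 ≤ |L| * max S 1 := by positivity
    linarith
  · have hle : L * s ≤ |L| * max S 1 :=
      mul_le_mul (le_abs_self L) hsS hs (abs_nonneg L)
    linarith [hg s hs]

lemma exists_lipschitzOnWith_Icc (hg0 : g 0 = 0)
    (hg : Tendsto (fun s => g s / s) (nhdsWithin 0 (Ioi 0)) (nhds 0))
    (hsmooth : ∃ ε₀ > (0 : ℝ), ∃ g' : ℝ → ℝ,
      (∀ s ∈ Ico (0 : ℝ) ε₀, HasDerivWithinAt g (g' s) (Ico (0 : ℝ) ε₀) s) ∧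
      ContinuousOn g' (Ico (0 : ℝ) ε₀)) {γ : NNReal} (hγ : 0 < γ) :
    ∃ r > 0, LipschitzOnWith γ g (Icc 0 r) := by
  obtain ⟨ε, hε, g', hderiv, hcont⟩ := hsmooth
  have h0 : (0 : ℝ) ∈ Ico 0 ε := ⟨le_rfl, hε⟩
  have hg'0 : g' 0 = 0 := by
    have hslope := hasDerivWithinAt_iff_tendsto_slope.1 (hderiv 0 h0)
    rw [Ico_sdiff_left, nhdsWithin_Ioo_eq_nhdsGT hε] at hslope
    refine tendsto_nhds_unique hslope (hg.congr fun s => ?_)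
    rw [slope_def_field, hg0, sub_zero, sub_zero]
  obtain ⟨δ, hδ, hsmall⟩ := Metric.continuousWithinAt_iff.1 (hcont 0 h0) γ hγ
  obtain ⟨r, hr, hrδε⟩ := exists_between (lt_min hδ hε)
  obtain ⟨hrδ, hrε⟩ := lt_min_iff.1 hrδε
  have hsub : Icc 0 r ⊆ Ico 0 ε := fun s hs => ⟨hs.1, hs.2.trans_lt hrε⟩
  refine ⟨r, hr, (convex_Icc 0 r).lipschitzOnWith_of_nnnorm_hasDerivWithin_le
    (fun s hs => (hderiv s (hsub hs)).mono hsub) fun s hs => ?_⟩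
  have hdist : dist s 0 < δ := by
    rw [dist_zero_right, Real.norm_of_nonneg hs.1]
    exact hs.2.trans_lt hrδ
  have hg's := hsmall (hsub hs) hdist
  rw [hg'0, dist_zero_right] at hg's
  exact hg's.le

end Nonlinearity

lemma IsBVPSol.isSolOn {B : BoundaryCond} {T : ℝ} {p u u' : ℝ → ℝ} (h : IsBVPSol B T p u u') :
    IsSolOn T p u u' :=
  ⟨h.hasDerivWithinAt, h.continuousOn_deriv, h.deriv_eq⟩

theorem statement_2_general {T : ℝ} (hT : 0 < T) {g : ℝ → ℝ} (hgc : ContinuousOn g (Ici 0))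
    (hg : ∀ s, 0 ≤ s → 0 ≤ g s) (hg0 : g 0 = 0) {r : ℝ} (hr : 0 < r)
    (hgpos : ∀ s ∈ Ioc 0 r, 0 < g s) {γ : NNReal} (hgγ : LipschitzOnWith γ g (Icc 0 r))
    {a : ℝ → ℝ} (ha : IntervalIntegrable a volume 0 T)
    (hγ : γ * T * (∫ t in (0 : ℝ)..T, |a t|) ^ 2 < -∫ t in (0 : ℝ)..T, a t)
    {ι : Type*} [Finite ι] [Nonempty ι] {σ τ : ι → ℝ}
    (hIT : ∀ i, 0 ≤ σ i ∧ σ i ≤ τ i ∧ τ i ≤ T)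
    (hapos : ∀ i, ∀ᵐ x ∂volume.restrict (Icc (σ i) (τ i)), 0 ≤ a x)
    (hane : ∀ i, ¬ ∀ᵐ x ∂volume.restrict (Icc (σ i) (τ i)), a x = 0)
    (haneg : ∀ᵐ x ∂volume.restrict (Icc 0 T \ ⋃ i, Icc (σ i) (τ i)), a x ≤ 0)
    (heig : ∀ i, ∃ lam : ℝ, (lam : EReal) < GrowthLiminf g ∧
      DirichletEigenpair a (σ i) (τ i) lam) :
    PosSolNeumann T a g ∧ PosSolPeriodic T a g := by
  choose lam hlam hpair using heig
  obtain ⟨j, hj⟩ := Finite.exists_max lam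
  obtain ⟨L, hjL, hL⟩ := EReal.lt_iff_exists_real_btwn.1 (hlam j)
  obtain ⟨C, hC⟩ := exists_affine_le_of_lt_growthLiminf hg hL
  have hmax : EqOn (fun s => g (max s 0)) g (Ici 0) := fun s hs => congrArg g (max_eq_left hs)
  have hsol (B : BoundaryCond) : ∃ u u', IsSolOn T (fun t => a t * g (u t)) u u' ∧
      (∀ x ∈ Icc 0 T, 0 < u x) ∧ B.Holds T u u' := by
    obtain ⟨u, u', hu, hpos⟩ := exists_pos_isBVPSol (B := B) (G := fun s => g (max s 0)) hT
      (isAdmissible_comp_max hg hg0)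
      (hgc.comp_continuous (continuous_id.max continuous_const) fun s => le_max_right s 0) hr
      (fun s hs => (hgpos s hs).trans_eq (hmax hs.1.le).symm)
      (fun s hs t ht => by rw [hmax hs.1, hmax ht.1]; exact hgγ hs ht)
      (fun s hs => (hC s hs).trans_eq (hmax hs).symm) ha hγ hIT hapos hane haneg
      fun i => ⟨lam i, (hj i).trans_lt (EReal.coe_lt_coe_iff.1 hjL), hpair i⟩
    have hu' := hu.congr fun t ht => congrArg (a t * ·) (hmax (hpos t ht).le)
    exact ⟨u, u', hu'.isSolOn, hpos, hu'.holds⟩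
  exact ⟨hsol .neumann, hsol .periodic⟩

/-- Theorem (main, smooth-near-zero case): under (g1), `g(s)/s → 0` as `s → 0⁺`,
continuous differentiability of `g` on a right neighborhood `[0,ε₀)` of `0`,
(a1), (a2), and `g_∞ > λ₁ⁱ` for every interval of positivity `Iᵢ`, the equation
`u'' + a(x) g(u) = 0` has a positive Neumann solution and a positive periodic
solution. -/
theorem statement_2
    (T : ℝ) (hT : 0 < T)
    (g : ℝ → ℝ) (hg1 : CondG1 g)
    (hg0 : Tendsto (fun s => g s / s) (nhdsWithin 0 (Ioi 0)) (nhds 0))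
    (hsmooth : ∃ ε₀ > (0:ℝ), ∃ g' : ℝ → ℝ,
      (∀ s ∈ Ico (0:ℝ) ε₀, HasDerivWithinAt g (g' s) (Ico (0:ℝ) ε₀) s) ∧
      ContinuousOn g' (Ico (0:ℝ) ε₀))
    (a : ℝ → ℝ) (ha : IntervalIntegrable a volume 0 T)
    (m : ℕ) (hm : 0 < m) (σ τ : Fin m → ℝ)
    (hIT : ∀ i, 0 ≤ σ i ∧ σ i ≤ τ i ∧ τ i ≤ T)
    (hdisj : Pairwise fun i j => Disjoint (Icc (σ i) (τ i)) (Icc (σ j) (τ j)))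
    (hapos : ∀ i, ∀ᵐ x ∂(volume.restrict (Icc (σ i) (τ i))), 0 ≤ a x)
    (hane0 : ∀ i, ¬ (∀ᵐ x ∂(volume.restrict (Icc (σ i) (τ i))), a x = 0))
    (haneg : ∀ᵐ x ∂(volume.restrict (Icc (0:ℝ) T \ ⋃ i, Icc (σ i) (τ i))), a x ≤ 0)
    (ha2 : (∫ x in (0:ℝ)..T, a x) < 0)
    (heig : ∀ i, ∃ lam : ℝ, 0 < lam ∧ (lam : EReal) < GrowthLiminf g ∧
      DirichletEigenpair a (σ i) (τ i) lam) :
    PosSolNeumann T a g ∧ PosSolPeriodic T a g := by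
  obtain ⟨hgc, hg, hg00, hgpos⟩ := hg1
  have : Nonempty (Fin m) := ⟨⟨0, hm⟩⟩
  obtain ⟨γ, hγ, hγa⟩ := exists_pos_mul_lt (neg_pos.2 ha2) (T * (∫ t in (0 : ℝ)..T, |a t|) ^ 2)
  obtain ⟨r, hr, hgγ⟩ := exists_lipschitzOnWith_Icc hg00 hg0 hsmooth (γ := ⟨γ, hγ.le⟩) hγ
  rw [mul_comm, ← mul_assoc] at hγa
  exact statement_2_general hT hgc hg hg00 hr (fun s hs => hgpos s hs.1) hgγ ha hγa hIT hapos
    hane0 haneg fun i => (heig i).imp fun _ h => h.2
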